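/- arXiv:1911.06225 — 3 statements merged into one kernel-verified Lean document; each statement's English description precedes it below -/
import Mathlib

section
/- Let μ be a probability measure on ℝ with ∫ |x| dμ(x) < ∞ that is invariant under the reflection R_θ(x) = 2θ − x, and let F be its distribution function. Then for every φ ∈ 𝒞 with ω(φ, F) > −∞, the symmetrized function φ̄(x) = (φ(x) + φ(2θ − x))/2 belongs to SC_θ = {ψ(· − θ) : ψ ∈ SC₀} and satisfies ω(φ, F) ≤ ω(φ̄, F); consequently sup_{φ ∈ 𝒞} ω(φ, F) = sup_{φ ∈ SC_θ} ω(φ, F). -/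
open MeasureTheory Filter Set
open scoped ENNReal NNReal

noncomputable section

/-- `exp` of an extended real number, valued in `ℝ≥0∞`. -/
def expE (y : EReal) : ℝ≥0∞ :=
  if y = ⊥ then 0 else if y = ⊤ then ⊤ else ENNReal.ofReal (Real.exp y.toReal)

/-- Truncation of an extended real number to `ℝ≥0∞` (negative values go to `0`). -/
def toENN (y : EReal) : ℝ≥0∞ :=
  if y = ⊤ then ⊤ else ENNReal.ofReal y.toReal

/-- Signed (upper-minus-lower) integral of an `EReal`-valued function against a measure. -/
def eIntegral (μ : Measure ℝ) (ψ : ℝ → EReal) : EReal :=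
  ((∫⁻ x, toENN (ψ x) ∂μ : ℝ≥0∞) : EReal) - ((∫⁻ x, toENN (-(ψ x)) ∂μ : ℝ≥0∞) : EReal)

/-- Concavity for `EReal`-valued functions on `ℝ`. -/
def EConcave (ψ : ℝ → EReal) : Prop :=
  ∀ x y : ℝ, ∀ t : ℝ, 0 ≤ t → t ≤ 1 →
    ((t : EReal) * ψ x + (((1 - t) : ℝ) : EReal) * ψ y) ≤ ψ (t * x + (1 - t) * y)

/-- The class `SC₀` of proper, closed (upper semicontinuous), concave functions
`ℝ → [−∞, ∞)` that are symmetric about `0`. -/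
def memSC0 (ψ : ℝ → EReal) : Prop :=
  (∀ x, ψ x < ⊤) ∧ (∃ x, ψ x ≠ ⊥) ∧ UpperSemicontinuous ψ ∧ EConcave ψ ∧ ∀ x, ψ (-x) = ψ x

/-- The criterion function `Ψ(θ, ψ, F) = ∫ ψ(x − θ) dμ(x) − ∫ e^{ψ(x)} dx`. -/
def Psi (θ : ℝ) (ψ : ℝ → EReal) (μ : Measure ℝ) : EReal :=
  eIntegral μ (fun x => ψ (x - θ)) - ((∫⁻ x, expE (ψ x) : ℝ≥0∞) : EReal)

/-- `L(θ; F) = sup_{ψ ∈ SC₀} Ψ(θ, ψ, F)`. -/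
def Ltheta (θ : ℝ) (μ : Measure ℝ) : EReal :=
  ⨆ ψ ∈ {ψ : ℝ → EReal | memSC0 ψ}, Psi θ ψ μ

/-- `L(F) = sup_{θ ∈ ℝ, ψ ∈ SC₀} Ψ(θ, ψ, F)`. -/
def Lsup (μ : Measure ℝ) : EReal := ⨆ θ : ℝ, Ltheta θ μ

/-- Condition A: `μ` is a probability measure that is not a point mass,
with a finite first absolute moment. -/
def CondA (μ : Measure ℝ) : Prop :=
  IsProbabilityMeasure μ ∧ (∀ x : ℝ, μ ≠ Measure.dirac x) ∧
    (∫⁻ x, ENNReal.ofReal |x| ∂μ) < ⊤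

/-- The empirical measure of the data `X₁, …, Xₙ`. -/
def empMeas {n : ℕ} (X : Fin n → ℝ) : Measure ℝ :=
  ((n : ℝ≥0∞))⁻¹ • ∑ i : Fin n, Measure.dirac (X i)

/-- The empirical measure of the first `n` entries of a sequence. -/
def empSeq (X : ℕ → ℝ) (n : ℕ) : Measure ℝ :=
  ((n : ℝ≥0∞))⁻¹ • ∑ i ∈ Finset.range n, Measure.dirac (X i)

/-- The density `e^ψ` as a real-valued function. -/
def gReal (ψ : ℝ → EReal) (x : ℝ) : ℝ := (expE (ψ x)).toReal

/-- A knot of a concave function `ψ`: a point where the left and right derivatives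
differ, or a boundary point of `dom ψ = {ψ > −∞}`. -/
def IsKnot (ψ : ℝ → EReal) (x : ℝ) : Prop :=
  x ∈ frontier {y : ℝ | ψ y ≠ ⊥} ∨
    derivWithin (fun y => (ψ y).toReal) (Set.Iio x) x ≠
      derivWithin (fun y => (ψ y).toReal) (Set.Ioi x) x

/-- The class `𝒞` of proper closed concave functions `ℝ → [−∞, ∞)`. -/
def memC (φ : ℝ → EReal) : Prop :=
  (∀ x, φ x < ⊤) ∧ (∃ x, φ x ≠ ⊥) ∧ UpperSemicontinuous φ ∧ EConcave φ

/-- The criterion function `ω(φ, F) = ∫ φ dμ − ∫ e^{φ(x)} dx`. -/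
def omegaF (φ : ℝ → EReal) (μ : Measure ℝ) : EReal :=
  eIntegral μ φ - ((∫⁻ x, expE (φ x) : ℝ≥0∞) : EReal)

/-- `(θ, ψ)` maximizes `Ψ(·, ·, μ)` over `ℝ × SC₀`. -/
def IsMaximizer (θ : ℝ) (ψ : ℝ → EReal) (μ : Measure ℝ) : Prop :=
  memSC0 ψ ∧ ∀ (θ' : ℝ) (ψ' : ℝ → EReal), memSC0 ψ' → Psi θ' ψ' μ ≤ Psi θ ψ μ

/-- Condition B: the `θ`-component of a maximizer of `Ψ(·, ·, μ)` is unique. -/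
def CondB (μ : Measure ℝ) : Prop :=
  ∀ (θ₁ θ₂ : ℝ) (ψ₁ ψ₂ : ℝ → EReal),
    IsMaximizer θ₁ ψ₁ μ → IsMaximizer θ₂ ψ₂ μ → θ₁ = θ₂

/-- `J(F) = {x : 0 < F(x) < 1}`. -/
def Jset (μ : Measure ℝ) : Set ℝ := {x : ℝ | 0 < μ (Set.Iic x) ∧ μ (Set.Iic x) < 1}

/-- The Hellinger distance between two densities. -/
def Hdist (f g : ℝ → ℝ) : ℝ :=
  Real.sqrt ((1 / 2) * ∫ x, (Real.sqrt (f x) - Real.sqrt (g x)) ^ 2)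

/-- Finite Fisher information for location: `g` is a.e. differentiable with
square-integrable score. -/
def FiniteFisher (g : ℝ → ℝ) : Prop :=
  ∃ D : ℝ → ℝ, (∀ᵐ x : ℝ, HasDerivAt g (D x) x) ∧
    (∫⁻ x, ENNReal.ofReal ((D x) ^ 2 / g x)) < ⊤

/-- The symmetrization `μ^{sym}_θ = (μ + R_θ#μ)/2` of a measure about `θ`. -/
def symMeas (θ : ℝ) (μ : Measure ℝ) : Measure ℝ :=
  ((2 : ℝ≥0∞))⁻¹ • (μ + Measure.map (fun x => 2 * θ - x) μ)

end

lemma toENN_eq : toENN = EReal.toENNReal := rfl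

lemma half_distrib (t : ℝ) (ht : 0 ≤ t) (y z : EReal) :
    (t : EReal) * (y + z) = t * y + t * z :=
  EReal.left_distrib_of_nonneg_of_ne_top (by exact_mod_cast ht) (EReal.coe_ne_top _) y z

lemma half_real (a b : ℝ) : (((1 : ℝ) / 2 : ℝ) : EReal) * ((a : EReal) + b)
    = (((a + b) / 2 : ℝ) : EReal) := by
  rw [← EReal.coe_add, ← EReal.coe_mul]; congr 1; ring

lemma half_bot : (((1 : ℝ) / 2 : ℝ) : EReal) * (⊥ : EReal) = ⊥ :=
  EReal.coe_mul_bot_of_pos (by norm_num)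

lemma pt_id (a b : EReal) (ha : a < ⊤) (hb : b < ⊤) :
    2 * toENN ((((1 : ℝ) / 2 : ℝ) : EReal) * (a + b)) + (toENN (-a) + toENN (-b)) =
    2 * toENN (-((((1 : ℝ) / 2 : ℝ) : EReal) * (a + b))) + (toENN a + toENN b) := by
  induction a with
  | top => simp at ha
  | bot => rw [EReal.bot_add, half_bot]; simp [toENN]
  | coe a =>
    induction b with
    | top => simp at hb
    | bot => rw [EReal.add_bot, half_bot]; simp [toENN]
    | coe b =>
      rw [half_real]
      simp only [← EReal.coe_neg, toENN, EReal.coe_ne_top, if_false, EReal.toReal_coe]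
      have h2 : (2 : ℝ≥0∞) = ENNReal.ofReal 2 := by simp
      rw [h2]
      have e : ∀ x : ℝ, ENNReal.ofReal x = ENNReal.ofReal (max x 0) := by
        intro x; rw [ENNReal.ofReal_max]; simp
      rw [e ((a+b)/2), e (-a), e (-b), e (-((a+b)/2)), e a, e b]
      rw [← ENNReal.ofReal_mul (by norm_num), ← ENNReal.ofReal_mul (by norm_num),
        ← ENNReal.ofReal_add (by positivity) (by positivity),
        ← ENNReal.ofReal_add (by positivity) (by positivity),
        ← ENNReal.ofReal_add (by positivity) (by positivity),
        ← ENNReal.ofReal_add (by positivity) (by positivity)]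
      congr 1
      have f : ∀ x : ℝ, max x 0 = max (-x) 0 + x := by
        intro x; rcases le_total x 0 with h | h <;> simp [h]
      rw [f ((a+b)/2), f a, f b]; ring

lemma pt_neg (a b : EReal) (ha : a < ⊤) (hb : b < ⊤) :
    toENN (-((((1 : ℝ) / 2 : ℝ) : EReal) * (a + b))) ≤ toENN (-a) + toENN (-b) := by
  induction a with
  | top => simp at ha
  | bot => simp [toENN]
  | coe a =>
    induction b with
    | top => simp at hb
    | bot => simp [toENN]
    | coe b =>
      rw [half_real]
      simp only [← EReal.coe_neg, toENN, EReal.coe_ne_top, if_false, EReal.toReal_coe]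
      have e : ∀ x : ℝ, ENNReal.ofReal x = ENNReal.ofReal (max x 0) := by
        intro x; rw [ENNReal.ofReal_max]; simp
      rw [e (-a), e (-b), ← ENNReal.ofReal_add (by positivity) (by positivity)]
      apply ENNReal.ofReal_le_ofReal
      have := le_max_left (-a) 0
      have := le_max_left (-b) 0
      have := le_max_right (-a) 0
      have := le_max_right (-b) 0
      linarith

lemma pt_exp (a b : EReal) (ha : a < ⊤) (hb : b < ⊤) :
    2 * expE ((((1 : ℝ) / 2 : ℝ) : EReal) * (a + b)) ≤ expE a + expE b := by
  induction a with
  | top => simp at ha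
  | bot => rw [EReal.bot_add, half_bot]; simp [expE]
  | coe a =>
    induction b with
    | top => simp at hb
    | bot => rw [EReal.add_bot, half_bot]; simp [expE]
    | coe b =>
      rw [half_real]
      simp only [expE, EReal.coe_ne_top, EReal.coe_ne_bot, if_false, EReal.toReal_coe]
      have h2 : (2 : ℝ≥0∞) = ENNReal.ofReal 2 := by simp
      rw [h2, ← ENNReal.ofReal_mul (by norm_num),
        ← ENNReal.ofReal_add (by positivity) (by positivity)]
      apply ENNReal.ofReal_le_ofReal
      have e1 : Real.exp a = Real.exp (a/2) * Real.exp (a/2) := by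
        rw [← Real.exp_add]; congr 1; ring
      have e2 : Real.exp b = Real.exp (b/2) * Real.exp (b/2) := by
        rw [← Real.exp_add]; congr 1; ring
      have e3 : Real.exp ((a+b)/2) = Real.exp (a/2) * Real.exp (b/2) := by
        rw [← Real.exp_add]; congr 1; ring
      rw [e1, e2, e3]
      nlinarith [sq_nonneg (Real.exp (a/2) - Real.exp (b/2))]

lemma meas_toENN : Measurable toENN := by
  rw [toENN_eq]; exact measurable_ereal_toENNReal

lemma meas_expE : Measurable expE := by
  unfold expE
  refine Measurable.ite (measurableSet_singleton _) measurable_const ?_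
  refine Measurable.ite (measurableSet_singleton _) measurable_const ?_
  exact (Real.measurable_exp.comp measurable_ereal_toReal).ennreal_ofReal

lemma half_mono : Monotone (fun x : EReal => (((1 : ℝ) / 2 : ℝ) : EReal) * x) := by
  intro x y h
  exact mul_le_mul_of_nonneg_left h (by exact_mod_cast (by norm_num : (0:ℝ) ≤ 1/2))

lemma half_cont : Continuous (fun x : EReal => (((1 : ℝ) / 2 : ℝ) : EReal) * x) := by
  rw [continuous_iff_continuousAt]
  intro x
  have h0 : (((1 : ℝ) / 2 : ℝ) : EReal) ≠ 0 := by
    exact_mod_cast (by norm_num : (1:ℝ)/2 ≠ 0)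
  have := EReal.continuousAt_mul (p := ((((1 : ℝ) / 2 : ℝ) : EReal), x))
    (Or.inl h0) (Or.inl h0) (Or.inl (EReal.coe_ne_bot _)) (Or.inl (EReal.coe_ne_top _))
  exact ContinuousAt.comp (f := fun x : EReal => ((((1 : ℝ) / 2 : ℝ) : EReal), x)) this
    (by fun_prop)

lemma half_lt_top (a b : EReal) (ha : a < ⊤) (hb : b < ⊤) :
    (((1 : ℝ) / 2 : ℝ) : EReal) * (a + b) < ⊤ := by
  induction a with
  | top => simp at ha
  | bot => rw [EReal.bot_add, half_bot]; simp
  | coe a =>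
    induction b with
    | top => simp at hb
    | bot => rw [EReal.add_bot, half_bot]; simp
    | coe b => rw [half_real]; exact EReal.coe_lt_top _

lemma half_ne_bot (a b : EReal) (ha : a < ⊤) (hb : b < ⊤) (ha' : a ≠ ⊥) (hb' : b ≠ ⊥) :
    (((1 : ℝ) / 2 : ℝ) : EReal) * (a + b) ≠ ⊥ := by
  lift a to ℝ using ⟨ha.ne, ha'⟩
  lift b to ℝ using ⟨hb.ne, hb'⟩
  rw [half_real]; exact EReal.coe_ne_bot _

lemma concave_affine {φ : ℝ → EReal} (h : EConcave φ) (s c : ℝ) :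
    EConcave (fun x => φ (s * x + c)) := by
  intro x y t h0 h1
  have := h (s * x + c) (s * y + c) t h0 h1
  convert this using 2
  ring

lemma usc_affine {φ : ℝ → EReal} (h : UpperSemicontinuous φ) (s c : ℝ) :
    UpperSemicontinuous (fun x => φ (s * x + c)) :=
  UpperSemicontinuous.comp h (g := fun x : ℝ => s * x + c) (by fun_prop)

lemma concave_half {f g : ℝ → EReal} (hf : EConcave f) (hg : EConcave g) :
    EConcave (fun x => (((1 : ℝ) / 2 : ℝ) : EReal) * (f x + g x)) := by
  intro x y t h0 h1
  have h := half_mono (add_le_add (hf x y t h0 h1) (hg x y t h0 h1))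
  refine le_trans (le_of_eq ?_) h
  simp only [half_distrib _ h0, half_distrib _ (sub_nonneg.2 h1),
    half_distrib (1/2) (by norm_num)]
  simp only [mul_left_comm _ (((1 : ℝ) / 2 : ℝ) : EReal)]
  rw [add_add_add_comm]

lemma omega_parts {φ : ℝ → EReal} {μ : Measure ℝ} (h : omegaF φ μ ≠ ⊥) :
    (∫⁻ x, toENN (-(φ x)) ∂μ) ≠ ⊤ ∧ (∫⁻ x, expE (φ x)) ≠ ⊤ := by
  constructor
  · intro h'; apply h; simp [omegaF, eIntegral, h']
  · intro h'; apply h; simp [omegaF, h']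

lemma sub_eq_aux (P N P' N' : ℝ≥0∞) (hN : N ≠ ⊤) (hN' : N' ≠ ⊤) (h : P' + N = N' + P) :
    (P : EReal) - N = (P' : EReal) - N' := by
  lift N to ℝ≥0 using hN
  lift N' to ℝ≥0 using hN'
  by_cases hP : P = ⊤
  · subst hP
    have : P' = ⊤ := by
      by_contra hc
      lift P' to ℝ≥0 using hc
      rw [add_top] at h
      exact absurd h (by rw [← ENNReal.coe_add]; exact ENNReal.coe_ne_top)
    rw [this]
    rfl
  · have hP' : P' ≠ ⊤ := by
      rintro rfl
      rw [top_add] at h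
      exact (ENNReal.add_ne_top.2 ⟨ENNReal.coe_ne_top, hP⟩) h.symm
    lift P to ℝ≥0 using hP
    lift P' to ℝ≥0 using hP'
    have h' : (P' : ℝ) + N = N' + P := by exact_mod_cast h
    show ((P : ℝ) : EReal) - ((N : ℝ) : EReal) = ((P' : ℝ) : EReal) - ((N' : ℝ) : EReal)
    rw [← EReal.coe_sub, ← EReal.coe_sub]
    congr 1; linarith

lemma part1 (μ : Measure ℝ) [IsProbabilityMeasure μ] (θ : ℝ)
    (hsym : Measure.map (fun x => 2 * θ - x) μ = μ) (φ : ℝ → EReal) (hφ : memC φ)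
    (hω : omegaF φ μ ≠ ⊥) :
    (∃ ψ : ℝ → EReal, memSC0 ψ ∧
            (fun x => (((1 : ℝ) / 2 : ℝ) : EReal) * (φ x + φ (2 * θ - x))) =
              fun x => ψ (x - θ)) ∧
          omegaF φ μ ≤
            omegaF (fun x => (((1 : ℝ) / 2 : ℝ) : EReal) * (φ x + φ (2 * θ - x))) μ := by
  obtain ⟨htop, hne, husc, hconc⟩ := hφ
  obtain ⟨hN, hE⟩ := omega_parts hω
  have mφ : Measurable φ := husc.measurable
  have mR : Measurable (fun x : ℝ => 2 * θ - x) := by fun_prop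
  have inv : ∀ f : ℝ → ℝ≥0∞, Measurable f → ∫⁻ x, f (2 * θ - x) ∂μ = ∫⁻ x, f x ∂μ := by
    intro f hf
    conv_rhs => rw [← hsym]
    rw [lintegral_map hf mR]
  have mφR : Measurable (fun x => φ (2 * θ - x)) := mφ.comp mR
  have mbar : Measurable (fun x => (((1 : ℝ) / 2 : ℝ) : EReal) * (φ x + φ (2 * θ - x))) :=
    half_cont.measurable.comp (mφ.add mφR)
  have mn : Measurable (fun x => toENN (-(φ x))) := meas_toENN.comp mφ.neg
  have mp : Measurable (fun x => toENN (φ x)) := meas_toENN.comp mφ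
  have me : Measurable (fun x => expE (φ x)) := meas_expE.comp mφ
  have mnR : Measurable (fun x => toENN (-(φ (2 * θ - x)))) := mn.comp mR
  have mpR : Measurable (fun x => toENN (φ (2 * θ - x))) := mp.comp mR
  have meR : Measurable (fun x => expE (φ (2 * θ - x))) := me.comp mR
  constructor
  · refine ⟨fun y => (((1 : ℝ) / 2 : ℝ) : EReal) * (φ (1 * y + θ) + φ ((-1) * y + θ)),
      ⟨fun x => half_lt_top _ _ (htop _) (htop _), ?_, ?_, ?_, ?_⟩, ?_⟩
    · have h1 : ∀ᵐ x ∂μ, toENN (-(φ x)) < ⊤ := ae_lt_top mn hN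
      have h2 : ∀ᵐ x ∂μ, toENN (-(φ (2 * θ - x))) < ⊤ := by
        apply ae_lt_top mnR
        rw [inv _ mn]; exact hN
      obtain ⟨x, hx1, hx2⟩ := (h1.and h2).exists
      refine ⟨x - θ, half_ne_bot _ _ (htop _) (htop _) ?_ ?_⟩
      · intro h
        rw [show 1 * (x - θ) + θ = x by ring] at h
        simp [h, toENN] at hx1
      · intro h
        rw [show (-1) * (x - θ) + θ = 2 * θ - x by ring] at h
        simp [h, toENN] at hx2
    · refine half_cont.comp_upperSemicontinuous ?_ half_mono
      refine UpperSemicontinuous.add' (usc_affine husc 1 θ) (usc_affine husc (-1) θ) ?_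
      intro x
      exact EReal.continuousAt_add (Or.inl (htop _).ne) (Or.inr (htop _).ne)
    · exact concave_half (concave_affine hconc 1 θ) (concave_affine hconc (-1) θ)
    · intro x
      simp only
      rw [add_comm]
      congr 3 <;> ring
    · funext x
      simp only
      rw [show 1 * (x - θ) + θ = x by ring, show (-1) * (x - θ) + θ = 2 * θ - x by ring]
  · set bar := (fun x => (((1 : ℝ) / 2 : ℝ) : EReal) * (φ x + φ (2 * θ - x))) with hbar
    have mbp : Measurable (fun x => toENN (bar x)) := meas_toENN.comp mbar
    have mbn : Measurable (fun x => toENN (-(bar x))) := meas_toENN.comp mbar.neg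
    have mbe : Measurable (fun x => expE (bar x)) := meas_expE.comp mbar
    have hN' : (∫⁻ x, toENN (-(bar x)) ∂μ) ≠ ⊤ := by
      have : (∫⁻ x, toENN (-(bar x)) ∂μ) ≤
          ∫⁻ x, (toENN (-(φ x)) + toENN (-(φ (2 * θ - x)))) ∂μ :=
        lintegral_mono (fun x => pt_neg _ _ (htop _) (htop _))
      rw [lintegral_add_left mn, inv _ mn] at this
      exact ne_top_of_le_ne_top (ENNReal.add_ne_top.2 ⟨hN, hN⟩) this
    have key : (∫⁻ x, (2 * toENN (bar x) + (toENN (-(φ x)) + toENN (-(φ (2 * θ - x))))) ∂μ)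
        = ∫⁻ x, (2 * toENN (-(bar x)) + (toENN (φ x) + toENN (φ (2 * θ - x)))) ∂μ :=
      lintegral_congr (fun x => pt_id _ _ (htop _) (htop _))
    rw [lintegral_add_left (mbp.const_mul 2), lintegral_add_left (mbn.const_mul 2),
      lintegral_add_left mn, lintegral_add_left mp, inv _ mn, inv _ mp,
      lintegral_const_mul 2 mbp, lintegral_const_mul 2 mbn, ← two_mul, ← two_mul,
      ← mul_add, ← mul_add, ENNReal.mul_right_inj (by norm_num) (by norm_num)] at key
    have hexp : (∫⁻ x, expE (bar x)) ≤ ∫⁻ x, expE (φ x) := by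
      have : (∫⁻ x, 2 * expE (bar x)) ≤ ∫⁻ x, (expE (φ x) + expE (φ (2 * θ - x))) :=
        lintegral_mono (fun x => pt_exp _ _ (htop _) (htop _))
      rw [lintegral_add_left me, lintegral_const_mul 2 mbe,
        lintegral_sub_left_eq_self (fun x => expE (φ x)), ← two_mul] at this
      exact (ENNReal.mul_le_mul_iff_right (by norm_num) (by norm_num)).1 this
    unfold omegaF eIntegral
    rw [sub_eq_aux _ _ _ _ hN hN' key]
    exact EReal.sub_le_sub le_rfl (by exact_mod_cast hexp)

/-- If `μ` has a finite first moment and is invariant under the reflection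
`R_θ(x) = 2θ − x`, then for every `φ ∈ 𝒞` with `ω(φ, F) > −∞`, the symmetrization
`φ̄(x) = (φ(x) + φ(2θ − x))/2` lies in `SC_θ` and `ω(φ, F) ≤ ω(φ̄, F)`; consequently
`sup_{φ ∈ 𝒞} ω(φ, F) = sup_{φ ∈ SC_θ} ω(φ, F)`. -/
theorem statement9 (μ : Measure ℝ) [IsProbabilityMeasure μ]
    (hint : (∫⁻ x, ENNReal.ofReal |x| ∂μ) < ⊤) (θ : ℝ)
    (hsym : Measure.map (fun x => 2 * θ - x) μ = μ) :
    (∀ φ : ℝ → EReal, memC φ → omegaF φ μ ≠ ⊥ →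
        (∃ ψ : ℝ → EReal, memSC0 ψ ∧
            (fun x => (((1 : ℝ) / 2 : ℝ) : EReal) * (φ x + φ (2 * θ - x))) =
              fun x => ψ (x - θ)) ∧
          omegaF φ μ ≤
            omegaF (fun x => (((1 : ℝ) / 2 : ℝ) : EReal) * (φ x + φ (2 * θ - x))) μ) ∧
      (⨆ φ ∈ {φ : ℝ → EReal | memC φ}, omegaF φ μ) =
        ⨆ φ ∈ {φ : ℝ → EReal | ∃ ψ, memSC0 ψ ∧ φ = fun x => ψ (x - θ)}, omegaF φ μ := by
  have p1 := fun φ h h' => part1 μ θ hsym φ h h'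
  refine ⟨p1, le_antisymm ?_ ?_⟩
  · refine iSup₂_le fun φ hφ => ?_
    by_cases hω : omegaF φ μ = ⊥
    · rw [hω]; exact bot_le
    · obtain ⟨h1, h2⟩ := p1 φ hφ hω
      exact le_trans h2 (le_iSup₂_of_le _ h1 le_rfl)
  · refine iSup₂_le fun φ hφ => ?_
    obtain ⟨ψ, ⟨a, ⟨x, hx⟩, c, d, -⟩, rfl⟩ := hφ
    refine le_iSup₂_of_le (fun x => ψ (x - θ)) ⟨fun x => a _, ⟨x + θ, ?_⟩, ?_, ?_⟩ le_rfl
    · simpa using hx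
    · simpa [sub_eq_add_neg] using usc_affine c 1 (-θ)
    · simpa [sub_eq_add_neg] using concave_affine d 1 (-θ)
end

section
/- Let μ be a probability measure on ℝ satisfying Condition A and invariant under the reflection R_θ(x) = 2θ − x, with distribution function F. Then L(θ'; F) ≤ L(θ; F) for every θ' ∈ ℝ, with strict inequality whenever θ' ≠ θ; hence θ is the unique maximizer of θ' ↦ L(θ'; F) (Condition B holds with θ*(F) = θ). -/
open MeasureTheory Filter Set
open scoped ENNReal NNReal

lemma sc_conc {ψ : ℝ → EReal} (hc : EConcave ψ) (htop : ∀ x, ψ x < ⊤) {x y t a b : ℝ}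
    (h0 : 0 ≤ t) (h1 : t ≤ 1) (hx : ψ x = a) (hy : ψ y = b) :
    ∃ c : ℝ, ψ (t * x + (1 - t) * y) = c ∧ t * a + (1 - t) * b ≤ c := by
  have h := hc x y t h0 h1
  have ht := htop (t * x + (1 - t) * y)
  rw [hx, hy] at h
  generalize ψ (t * x + (1 - t) * y) = z at *
  induction z using EReal.rec with
  | bot =>
    exfalso
    rw [← EReal.coe_mul, ← EReal.coe_mul, ← EReal.coe_add] at h
    exact EReal.coe_ne_bot _ (le_bot_iff.1 h)
  | top => simp at ht
  | coe c => exact ⟨c, rfl, by exact_mod_cast h⟩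

lemma conc_of {ψ : ℝ → EReal} (htop : ∀ x, ψ x < ⊤)
    (H : ∀ x y t a b : ℝ, 0 < t → t < 1 → ψ x = a → ψ y = b →
      ∃ c : ℝ, ψ (t * x + (1 - t) * y) = c ∧ t * a + (1 - t) * b ≤ c) : EConcave ψ := by
  intro x y t h0 h1
  rcases h0.eq_or_lt with rfl | h0
  · simp
  rcases h1.eq_or_lt with rfl | h1
  · simp
  have hx := htop x
  have hy := htop y
  have h1' : 0 < 1 - t := by linarith
  have K := H x y t
  generalize ψ x = a at *
  generalize ψ y = b at *
  induction a using EReal.rec with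
  | bot => rw [EReal.coe_mul_bot_of_pos h0]; simp
  | top => simp at hx
  | coe a =>
    induction b using EReal.rec with
    | bot => rw [EReal.coe_mul_bot_of_pos h1']; simp
    | top => simp at hy
    | coe b =>
      obtain ⟨c, hc, hle⟩ := K a b h0 h1 rfl rfl
      rw [hc]; exact_mod_cast hle

lemma real_of {y : EReal} (h : y < ⊤) (h' : y ≠ ⊥) : y = (y.toReal : ℝ) :=
  (EReal.coe_toReal h.ne h').symm

lemma sc_mono {ψ : ℝ → EReal} (hψ : memSC0 ψ) {x y : ℝ} (h : |x| ≤ |y|) : ψ y ≤ ψ x := by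
  obtain ⟨htop, -, -, hc, hs⟩ := hψ
  by_cases hb : ψ y = ⊥
  · rw [hb]; exact bot_le
  have hy := real_of (htop y) hb
  by_cases hy0 : y = 0
  · subst hy0
    have : x = 0 := by simpa using h
    rw [this]
  have hpos : 0 < |y| := abs_pos.2 hy0
  obtain ⟨t, h0, h1, hx⟩ : ∃ t : ℝ, 0 ≤ t ∧ t ≤ 1 ∧ x = t * y + (1 - t) * (-y) := by
    refine ⟨(1 + x / y) / 2, ?_, ?_, ?_⟩
    · have : |x / y| ≤ 1 := by rw [abs_div]; exact (div_le_one hpos).2 h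
      have := (abs_le.1 this).1; linarith
    · have : |x / y| ≤ 1 := by rw [abs_div]; exact (div_le_one hpos).2 h
      have := (abs_le.1 this).2; linarith
    · field_simp; ring
  have hy' : ψ (-y) = ((ψ y).toReal : ℝ) := by rw [hs]; exact hy
  obtain ⟨c, hc1, hc2⟩ := sc_conc hc htop h0 h1 hy hy'
  rw [hx, hc1, hy]
  have : (ψ y).toReal ≤ c := by linarith
  exact_mod_cast this

noncomputable def mid (h : ℝ) (ψ : ℝ → EReal) (z : ℝ) : EReal :=
  ((1/2 : ℝ) : EReal) * ψ (z - h) + ((1/2 : ℝ) : EReal) * ψ (z + h)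

lemma half_lt_top_s10 {y : EReal} (h : y < ⊤) : ((1/2 : ℝ) : EReal) * y < ⊤ := by
  induction y using EReal.rec with
  | bot => rw [EReal.coe_mul_bot_of_pos (by norm_num)]; exact bot_lt_top
  | top => simp at h
  | coe c => exact_mod_cast EReal.coe_lt_top _

lemma mid_coe {h : ℝ} {ψ : ℝ → EReal} {z a b : ℝ} (ha : ψ (z - h) = a) (hb : ψ (z + h) = b) :
    mid h ψ z = ((a + b) / 2 : ℝ) := by
  rw [mid, ha, hb, ← EReal.coe_mul, ← EReal.coe_mul, ← EReal.coe_add]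
  congr 1; ring

lemma mid_bot1 {h : ℝ} {ψ : ℝ → EReal} {z : ℝ} (ha : ψ (z - h) = ⊥) : mid h ψ z = ⊥ := by
  rw [mid, ha, EReal.coe_mul_bot_of_pos (by norm_num)]; simp

lemma mid_bot2 {h : ℝ} {ψ : ℝ → EReal} {z : ℝ} (ha : ψ (z + h) = ⊥) : mid h ψ z = ⊥ := by
  rw [mid, ha, EReal.coe_mul_bot_of_pos (by norm_num)]; simp

lemma mid_top {h : ℝ} {ψ : ℝ → EReal} (htop : ∀ x, ψ x < ⊤) (z : ℝ) : mid h ψ z < ⊤ :=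
  EReal.add_lt_top (half_lt_top_s10 (htop _)).ne (half_lt_top_s10 (htop _)).ne

lemma mid_mem {h : ℝ} {ψ : ℝ → EReal} (hψ : memSC0 ψ) (hne : ∃ z, mid h ψ z ≠ ⊥) :
    memSC0 (mid h ψ) := by
  obtain ⟨htop, -, hu, hc, hs⟩ := hψ
  refine ⟨mid_top htop, hne, ?_, conc_of (mid_top htop) ?_, ?_⟩
  · have hcont : Continuous (fun y : EReal => ((1/2 : ℝ) : EReal) * y) :=
      continuous_iff_continuousAt.2 fun y => by
        have hne : ((1/2 : ℝ) : EReal) ≠ 0 := by exact_mod_cast (by norm_num : (1/2 : ℝ) ≠ 0)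
        exact EReal.Tendsto.mul tendsto_const_nhds tendsto_id (Or.inl hne) (Or.inl hne)
          (Or.inl (EReal.coe_ne_bot _)) (Or.inl (EReal.coe_ne_top _))
    have hmon : Monotone (fun y : EReal => ((1/2 : ℝ) : EReal) * y) := fun a b hab =>
      mul_le_mul_of_nonneg_left hab (by exact_mod_cast (by norm_num : (0:ℝ) ≤ 1/2))
    have h1 : UpperSemicontinuous (fun z : ℝ => ψ (z - h)) :=
      hu.comp (g := fun z : ℝ => z - h) (by fun_prop)
    have h2 : UpperSemicontinuous (fun z : ℝ => ψ (z + h)) :=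
      hu.comp (g := fun z : ℝ => z + h) (by fun_prop)
    refine (hcont.comp_upperSemicontinuous h1 hmon).add' (hcont.comp_upperSemicontinuous h2 hmon) ?_
    intro x
    exact EReal.continuousAt_add (Or.inl (half_lt_top_s10 (htop _)).ne) (Or.inr (half_lt_top_s10 (htop _)).ne)
  · intro x y t a b h0 h1 hx hy
    have x1 : ψ (x - h) ≠ ⊥ := fun hh => by rw [mid_bot1 hh] at hx; simp at hx
    have x2 : ψ (x + h) ≠ ⊥ := fun hh => by rw [mid_bot2 hh] at hx; simp at hx
    have y1 : ψ (y - h) ≠ ⊥ := fun hh => by rw [mid_bot1 hh] at hy; simp at hy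
    have y2 : ψ (y + h) ≠ ⊥ := fun hh => by rw [mid_bot2 hh] at hy; simp at hy
    have x1 := real_of (htop _) x1
    have x2 := real_of (htop _) x2
    have y1 := real_of (htop _) y1
    have y2 := real_of (htop _) y2
    obtain ⟨c, hc1, hc2⟩ := sc_conc hc htop h0.le h1.le x1 y1
    obtain ⟨d, hd1, hd2⟩ := sc_conc hc htop h0.le h1.le x2 y2
    have e1 : t * (x - h) + (1 - t) * (y - h) = (t * x + (1 - t) * y) - h := by ring
    have e2 : t * (x + h) + (1 - t) * (y + h) = (t * x + (1 - t) * y) + h := by ring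
    rw [e1] at hc1
    rw [e2] at hd1
    refine ⟨_, mid_coe hc1 hd1, ?_⟩
    rw [mid_coe x1 x2] at hx
    rw [mid_coe y1 y2] at hy
    have hx : _ = a := EReal.coe_injective hx
    have hy : _ = b := EReal.coe_injective hy
    rw [← hx, ← hy]
    linarith
  · intro x
    have e1 : ψ (-x - h) = ψ (x + h) := by rw [← hs]; congr 1; ring
    have e2 : ψ (-x + h) = ψ (x - h) := by rw [← hs]; congr 1; ring
    rw [mid, mid, e1, e2, add_comm]

noncomputable def G (ψ : ℝ → EReal) (x : ℝ) : ℝ := if ψ x = ⊥ then 0 else Real.exp ((ψ x).toReal / 2)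

lemma G_nonneg (ψ : ℝ → EReal) (x : ℝ) : 0 ≤ G ψ x := by
  unfold G; split_ifs; exacts [le_rfl, (Real.exp_pos _).le]

lemma expE_eq {ψ : ℝ → EReal} {x : ℝ} (htop : ψ x < ⊤) : expE (ψ x) = ENNReal.ofReal (G ψ x ^ 2) := by
  unfold expE G
  rw [if_neg htop.ne]
  split_ifs
  · simp
  · congr 1; rw [← Real.exp_nat_mul]; congr 1; push_cast; ring

lemma expE_mid {h : ℝ} {ψ : ℝ → EReal} {z : ℝ} (htop : ∀ x, ψ x < ⊤) :
    expE (mid h ψ z) = ENNReal.ofReal (G ψ (z - h) * G ψ (z + h)) := by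
  by_cases h1 : ψ (z - h) = ⊥
  · rw [mid_bot1 h1]; simp [expE, G, h1]
  by_cases h2 : ψ (z + h) = ⊥
  · rw [mid_bot2 h2]; simp [expE, G, h2]
  rw [mid_coe (real_of (htop _) h1) (real_of (htop _) h2)]
  simp only [expE, G, h1, h2, if_false, EReal.coe_ne_bot, EReal.coe_ne_top, EReal.toReal_coe]
  rw [← Real.exp_add]; congr 2; ring

lemma G_mono {ψ : ℝ → EReal} (hψ : memSC0 ψ) {x y : ℝ} (h : |x| ≤ |y|) : G ψ y ≤ G ψ x := by
  have hm := sc_mono hψ h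
  by_cases hy : ψ y = ⊥
  · simp only [G, hy, if_true]; exact G_nonneg ψ x
  have hx : ψ x ≠ ⊥ := fun hx => hy (by rw [hx] at hm; simpa using hm)
  simp only [G, hx, hy, if_false]
  have := EReal.toReal_le_toReal hm hy (hψ.1 x).ne
  gcongr

lemma G_meas {ψ : ℝ → EReal} (hψ : memSC0 ψ) : Measurable (G ψ) := by
  have hm : Measurable ψ := hψ.2.2.1.measurable
  unfold G
  refine Measurable.ite (hm (measurableSet_singleton ⊥)) measurable_const ?_
  exact Real.measurable_exp.comp (hm.ereal_toReal.div_const 2)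

lemma mass_ge {ψ : ℝ → EReal} (hψ : memSC0 ψ) {a m : ℝ} (ha : 0 ≤ a)
    (hm : (∫⁻ x, expE (ψ x)) = ENNReal.ofReal m) (hm0 : 0 ≤ m) : 2 * a * G ψ a ^ 2 ≤ m := by
  have : ENNReal.ofReal (2 * a * G ψ a ^ 2) ≤ ENNReal.ofReal m := by
    rw [← hm]
    calc ENNReal.ofReal (2 * a * G ψ a ^ 2)
        = ∫⁻ x in Icc (-a) a, ENNReal.ofReal (G ψ a ^ 2) := by
          rw [setLIntegral_const, Real.volume_Icc, ← ENNReal.ofReal_mul (by positivity)]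
          congr 1; ring
      _ ≤ ∫⁻ x in Icc (-a) a, expE (ψ x) := by
          refine setLIntegral_mono' measurableSet_Icc fun x hx => ?_
          rw [expE_eq (hψ.1 x)]
          refine ENNReal.ofReal_le_ofReal ?_
          have := G_mono hψ (x := x) (y := a) (by rw [abs_of_nonneg ha]; exact abs_le.2 hx)
          have := G_nonneg ψ a
          gcongr
      _ ≤ _ := setLIntegral_le_lintegral _ _
  exact (ENNReal.ofReal_le_ofReal_iff hm0).1 this

lemma ereal_toReal_neg' {y : EReal} : (-y).toReal = -y.toReal := by
  induction y using EReal.rec with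
  | bot => simp
  | top => simp
  | coe c => rw [← EReal.coe_neg, EReal.toReal_coe, EReal.toReal_coe]

lemma ennreal_coe_real {x : ℝ≥0∞} (h : x ≠ ⊤) : (x : EReal) = (x.toReal : ℝ) := by
  lift x to ℝ≥0 using h
  rfl

lemma eInt_real {μ : Measure ℝ} {φ : ℝ → EReal} (htop : ∀ x, φ x < ⊤)
    (hae : ∀ᵐ x ∂μ, φ x ≠ ⊥) (hi : Integrable (fun x => (φ x).toReal) μ) :
    eIntegral μ φ = ((∫ x, (φ x).toReal ∂μ : ℝ) : EReal) := by
  have e1 : (∫⁻ x, toENN (φ x) ∂μ) = ∫⁻ x, ENNReal.ofReal ((φ x).toReal) ∂μ := by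
    refine lintegral_congr fun x => ?_
    rw [toENN, if_neg (htop x).ne]
  have e2 : (∫⁻ x, toENN (-φ x) ∂μ) = ∫⁻ x, ENNReal.ofReal (-(φ x).toReal) ∂μ := by
    refine lintegral_congr_ae ?_
    filter_upwards [hae] with x hx
    rw [toENN, if_neg (by simpa using hx), ereal_toReal_neg']
  have f1 : (∫⁻ x, ENNReal.ofReal ((φ x).toReal) ∂μ) ≠ ⊤ := hi.lintegral_lt_top.ne
  have f2 : (∫⁻ x, ENNReal.ofReal (-(φ x).toReal) ∂μ) ≠ ⊤ := hi.neg.lintegral_lt_top.ne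
  rw [eIntegral, e1, e2, integral_eq_lintegral_pos_part_sub_lintegral_neg_part hi]
  rw [EReal.coe_sub, ennreal_coe_real f1,
    ennreal_coe_real f2]

lemma eInt_fin {μ : Measure ℝ} [IsProbabilityMeasure μ] {φ : ℝ → EReal} (hm : Measurable φ)
    {s : ℝ} (hs : ∀ x, φ x ≤ s) (hb : eIntegral μ φ ≠ ⊥) :
    (∀ᵐ x ∂μ, φ x ≠ ⊥) ∧ Integrable (fun x => (φ x).toReal) μ := by
  have htop : ∀ x, φ x < ⊤ := fun x => (hs x).trans_lt (EReal.coe_lt_top s)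
  have mE : Measurable toENN := by
    unfold toENN
    exact Measurable.ite (measurableSet_singleton ⊤) measurable_const
      (ENNReal.measurable_ofReal.comp measurable_ereal_toReal)
  have f1 : (∫⁻ x, toENN (φ x) ∂μ) < ⊤ := by
    calc _ ≤ ∫⁻ x, ENNReal.ofReal (|s|) ∂μ := by
          refine lintegral_mono fun x => ?_
          simp only
          rw [toENN, if_neg (htop x).ne]
          refine ENNReal.ofReal_le_ofReal ?_
          by_cases h : φ x = ⊥
          · rw [h]; simp
          · have := EReal.toReal_le_toReal (hs x) h (EReal.coe_ne_top s)
            exact this.trans (le_abs_self s)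
      _ < ⊤ := by simp
  have f2 : (∫⁻ x, toENN (-φ x) ∂μ) ≠ ⊤ := by
    intro h
    apply hb
    rw [eIntegral, h]
    simp [sub_eq_add_neg]
  have hae : ∀ᵐ x ∂μ, φ x ≠ ⊥ := by
    filter_upwards [ae_lt_top (mE.comp hm.neg) f2] with x hx h
    simp [toENN, h] at hx
  refine ⟨hae, hm.ereal_toReal.aestronglyMeasurable, ?_⟩
  refine lt_of_le_of_lt ?_ (ENNReal.add_lt_top.2 ⟨f1, f2.lt_top⟩)
  rw [← lintegral_add_left (f := fun x => toENN (φ x)) (mE.comp hm)]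
  refine lintegral_mono_ae ?_
  filter_upwards [hae] with x hx
  rw [toENN, toENN, if_neg (htop x).ne, if_neg (by simpa using hx), ereal_toReal_neg',
    Real.enorm_eq_ofReal_abs]
  rcases le_total 0 (φ x).toReal with h | h
  · rw [abs_of_nonneg h]; exact le_self_add
  · rw [abs_of_nonpos h]; exact le_add_self

lemma sc_zero {ψ : ℝ → EReal} (hψ : memSC0 ψ) : ψ 0 ≠ ⊥ := by
  obtain ⟨x, hx⟩ := hψ.2.1
  intro h
  have := sc_mono hψ (x := 0) (y := x) (by simp)
  rw [h] at this
  exact hx (le_bot_iff.1 this)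

lemma psi_fin {μ : Measure ℝ} [IsProbabilityMeasure μ] {ψ : ℝ → EReal} (hψ : memSC0 ψ) {θ : ℝ}
    (hb : Psi θ ψ μ ≠ ⊥) :
    (∀ᵐ x ∂μ, ψ (x - θ) ≠ ⊥) ∧ Integrable (fun x => (ψ (x - θ)).toReal) μ ∧
    ∃ m : ℝ, 0 ≤ m ∧ (∫⁻ x, expE (ψ x)) = ENNReal.ofReal m ∧
      Psi θ ψ μ = (((∫ x, (ψ (x - θ)).toReal ∂μ) - m : ℝ) : EReal) := by
  have hm : Measurable (fun x => ψ (x - θ)) :=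
    hψ.2.2.1.measurable.comp (measurable_id.sub_const θ)
  have h0 := real_of (hψ.1 0) (sc_zero hψ)
  have h1 : eIntegral μ (fun x => ψ (x - θ)) ≠ ⊥ := by
    intro h; apply hb; rw [Psi, h]; simp [sub_eq_add_neg]
  have h2 : (∫⁻ x, expE (ψ x)) ≠ ⊤ := by
    intro h; apply hb; rw [Psi, h]; simp [sub_eq_add_neg]
  obtain ⟨a, b⟩ := eInt_fin (s := (ψ 0).toReal) hm
    (fun x => by rw [← h0]; exact sc_mono hψ (by simp)) h1
  refine ⟨a, b, (∫⁻ x, expE (ψ x)).toReal, ENNReal.toReal_nonneg, (ENNReal.ofReal_toReal h2).symm, ?_⟩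
  rw [Psi, eInt_real (fun x => hψ.1 _) a b, EReal.coe_sub,
    ennreal_coe_real h2]

lemma num_bound {q c K s A : ℝ} (hq : 0 < q) (hc : 0 < c) (hA : 0 < A)
    (h : q * A + c * Real.exp s / A ≤ s + K + q) : s ≤ |K| + q + 6 / (q * c) := by
  by_contra! hs
  have hK := abs_nonneg K
  have hK' := le_abs_self K
  have hp : 0 < 6 / (q * c) := by positivity
  have hs0 : 0 < s := by linarith
  have h3 : s ^ 3 / 6 ≤ Real.exp s := by
    have := Real.pow_div_factorial_le_exp s hs0.le 3
    simpa [Nat.factorial] using this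
  have h4 : 4 * (q * c) * Real.exp s ≤ (q * A + c * Real.exp s / A) ^ 2 := by
    have e : (q * A) * (c * Real.exp s / A) = q * c * Real.exp s := by field_simp
    nlinarith [sq_nonneg (q * A - c * Real.exp s / A)]
  have h5 : (q * A + c * Real.exp s / A) ^ 2 ≤ (2 * s) ^ 2 := by
    have : 0 ≤ q * A + c * Real.exp s / A := by positivity
    gcongr
    linarith
  have h6 : 6 < s * (q * c) := by
    rw [← div_lt_iff₀ (by positivity)]; linarith
  have h7 : 4 * (q * c) * (s ^ 3 / 6) ≤ 4 * (q * c) * Real.exp s := by gcongr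
  have h8 : 0 < s ^ 2 := by positivity
  nlinarith [mul_lt_mul_of_pos_right h6 h8]

lemma apriori {μ : Measure ℝ} [IsProbabilityMeasure μ] {θ δ K : ℝ} (hδ : 0 < δ)
    (hq : 0 < μ.real {x | δ ≤ |x - θ|}) :
    ∃ S B : ℝ, ∀ ψ, memSC0 ψ → ((-K : ℝ) : EReal) ≤ Psi θ ψ μ → Psi θ ψ μ ≤ S ∧
      Real.exp (-B) ≤ G ψ δ ^ 2 ∧
      ∃ m : ℝ, 0 ≤ m ∧ (∫⁻ x, expE (ψ x)) = ENNReal.ofReal m ∧ m ≤ S + K := by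
  set q := μ.real {x | δ ≤ |x - θ|} with hqdef
  set c : ℝ := 2 * δ * Real.exp (-1) with hc
  have hcpos : 0 < c := by positivity
  set S : ℝ := |K| + q + 6 / (q * c) with hS
  refine ⟨S, K + (S + K) / q, fun ψ hψ hK => ?_⟩
  have hb : Psi θ ψ μ ≠ ⊥ := fun h => by
    rw [h] at hK; exact EReal.coe_ne_bot _ (le_bot_iff.1 hK)
  obtain ⟨hae, hi, m, hm0, hm, hP⟩ := psi_fin hψ hb
  have hA : MeasurableSet {x : ℝ | δ ≤ |x - θ|} :=
    measurableSet_le measurable_const (by fun_prop)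
  have h0 := real_of (hψ.1 0) (sc_zero hψ)
  have hdb : ψ δ ≠ ⊥ := by
    intro hd
    have : ∀ᵐ x ∂μ, x ∉ {x : ℝ | δ ≤ |x - θ|} := by
      filter_upwards [hae] with x hx hx'
      apply hx
      have := sc_mono hψ (x := δ) (y := x - θ) (by rw [abs_of_pos hδ]; exact hx')
      rw [hd] at this
      exact le_bot_iff.1 this
    have : μ {x : ℝ | δ ≤ |x - θ|} = 0 := by
      simpa [ae_iff] using this
    rw [hqdef, measureReal_def, this] at hq
    simp at hq
  have hd := real_of (hψ.1 δ) hdb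
  set s := (ψ 0).toReal with hs
  set d := (ψ δ).toReal with hdd
  have hds : d ≤ s := EReal.toReal_le_toReal (sc_mono hψ (by simp)) hdb (hψ.1 0).ne
  have hint : ∫ x, (ψ (x - θ)).toReal ∂μ ≤ s - q * (s - d) := by
    have hi2 : Integrable (fun x => s - {x : ℝ | δ ≤ |x - θ|}.indicator (fun _ => s - d) x) μ :=
      (integrable_const s).sub ((integrable_const (s - d)).indicator hA)
    calc _ ≤ ∫ x, (s - {x : ℝ | δ ≤ |x - θ|}.indicator (fun _ => s - d) x) ∂μ := by
          refine integral_mono_ae hi hi2 ?_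
          filter_upwards [hae] with x hx
          by_cases hxA : x ∈ {x : ℝ | δ ≤ |x - θ|}
          · simp only [indicator_of_mem hxA]
            have := EReal.toReal_le_toReal (sc_mono hψ (x := δ) (y := x - θ)
              (by rw [abs_of_pos hδ]; exact hxA)) hx (hψ.1 δ).ne
            linarith
          · simp only [indicator_of_notMem hxA]
            have := EReal.toReal_le_toReal (sc_mono hψ (x := 0) (y := x - θ)
              (by simp)) hx (hψ.1 0).ne
            linarith
      _ = _ := by
          rw [integral_sub (integrable_const s) ((integrable_const (s - d)).indicator hA),
            integral_indicator_const _ hA]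
          simp [hqdef]
  rw [hP] at hK ⊢
  have hK : -K ≤ (∫ x, (ψ (x - θ)).toReal ∂μ) - m := by exact_mod_cast hK
  have hqD : 0 ≤ q * (s - d) := mul_nonneg hq.le (by linarith)
  set A := s - d + 1 with hAd
  have hApos : 0 < A := by linarith
  have hmA : c * Real.exp s / A ≤ m := by
    refine le_trans ?_ (mass_ge hψ (a := δ / A) (by positivity) hm hm0)
    obtain ⟨v, hv1, hv2⟩ := sc_conc hψ.2.2.2.1 hψ.1 (t := 1 / A) (by positivity)
      (by rw [div_le_one hApos]; linarith) hd h0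
    have e : 1 / A * δ + (1 - 1 / A) * 0 = δ / A := by ring
    rw [e] at hv1
    have hvs : s - 1 ≤ v := by
      have : 1 / A * d + (1 - 1 / A) * s = s - (A - 1) / A := by rw [hAd]; ring
      have h2 : (A - 1) / A ≤ 1 := by rw [div_le_one hApos]; linarith
      linarith
    have hG : G ψ (δ / A) ^ 2 = Real.exp v := by
      simp only [G, hv1, EReal.coe_ne_bot, if_false, EReal.toReal_coe]
      rw [← Real.exp_nat_mul]; congr 1; push_cast; ring
    rw [hG]
    have : Real.exp (s - 1) ≤ Real.exp v := Real.exp_le_exp.2 hvs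
    calc c * Real.exp s / A = 2 * (δ / A) * Real.exp (s - 1) := by
          rw [hc, sub_eq_add_neg, Real.exp_add]; ring
      _ ≤ _ := by gcongr
  have hsS : s ≤ S := num_bound (K := K) hq hcpos hApos (by rw [hAd] at *; nlinarith)
  refine ⟨?_, ?_, m, hm0, hm, by linarith⟩
  · have : (∫ x, (ψ (x - θ)).toReal ∂μ) - m ≤ S := by linarith
    exact_mod_cast this
  · have hG : G ψ δ ^ 2 = Real.exp d := by
      simp only [G, hdb, if_false]
      rw [← Real.exp_nat_mul]; congr 1; push_cast; ring
    rw [hG]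
    apply Real.exp_le_exp.2
    have : s - d ≤ (S + K) / q := by
      rw [le_div_iff₀ hq]; nlinarith
    linarith

lemma memLp_shift {g : ℝ → ℝ} (hg : MemLp g 2) (τ : ℝ) : MemLp (fun z => g (z + τ)) 2 :=
  hg.comp_measurePreserving (measurePreserving_add_right volume τ)

lemma shift_ineq {g : ℝ → ℝ} (hg : MemLp g 2) (τ : ℝ) (N : ℕ) :
    ∫ z, (g z - g (z + N * τ)) ^ 2 ≤ (N : ℝ) ^ 2 * ∫ z, (g z - g (z + τ)) ^ 2 := by
  have hI : ∀ a b : ℝ, Integrable (fun z => (g (z + a) - g (z + b)) ^ 2) := fun a b =>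
    ((memLp_shift hg a).sub (memLp_shift hg b)).integrable_sq
  have hk : ∀ k : ℕ, ∫ z, (g (z + k * τ) - g (z + (k + 1 : ℕ) * τ)) ^ 2
      = ∫ z, (g z - g (z + τ)) ^ 2 := fun k => by
    rw [← integral_add_right_eq_self (fun z => (g z - g (z + τ)) ^ 2) (k * τ)]
    congr 1; ext z
    have : z + (k + 1 : ℕ) * τ = z + k * τ + τ := by push_cast; ring
    rw [this]
  calc ∫ z, (g z - g (z + N * τ)) ^ 2
      ≤ ∫ z, (N : ℝ) * ∑ k ∈ Finset.range N, (g (z + k * τ) - g (z + (k + 1 : ℕ) * τ)) ^ 2 := by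
        refine integral_mono (by simpa using hI 0 (N * τ))
          ((integrable_finsetSum _ fun k _ => hI _ _).const_mul _) fun z => ?_
        have h1 := Finset.sum_range_sub' (fun k : ℕ => g (z + k * τ)) N
        have h2 := sq_sum_le_card_mul_sum_sq (s := Finset.range N)
          (f := fun k : ℕ => g (z + k * τ) - g (z + (k + 1 : ℕ) * τ))
        rw [h1] at h2
        simpa using h2
    _ = _ := by
        rw [integral_const_mul, integral_finsetSum _ fun k _ => hI _ _]
        simp only [hk, Finset.sum_const, Finset.card_range, nsmul_eq_mul]
        ring

lemma G_memLp {ψ : ℝ → EReal} (hψ : memSC0 ψ) {m : ℝ} (hm0 : 0 ≤ m)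
    (hm : (∫⁻ x, expE (ψ x)) = ENNReal.ofReal m) :
    MemLp (G ψ) 2 ∧ ∫ x, G ψ x ^ 2 = m := by
  have e : (∫⁻ x, ENNReal.ofReal (G ψ x ^ 2)) = ENNReal.ofReal m := by
    rw [← hm]; exact lintegral_congr fun x => (expE_eq (hψ.1 x)).symm
  constructor
  · rw [memLp_two_iff_integrable_sq (G_meas hψ).aestronglyMeasurable]
    refine ⟨((G_meas hψ).pow_const 2).aestronglyMeasurable, ?_⟩
    rw [hasFiniteIntegral_iff_ofReal (ae_of_all _ fun x => sq_nonneg _), e]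
    exact ENNReal.ofReal_lt_top
  · rw [integral_eq_lintegral_of_nonneg_ae (ae_of_all _ fun x => sq_nonneg _)
      ((G_meas hψ).pow_const 2).aestronglyMeasurable, e, ENNReal.toReal_ofReal hm0]

lemma mid_mass {ψ : ℝ → EReal} (hψ : memSC0 ψ) {m : ℝ} (hm0 : 0 ≤ m)
    (hm : (∫⁻ x, expE (ψ x)) = ENNReal.ofReal m) (h : ℝ) :
    0 ≤ m - (∫ z, (G ψ z - G ψ (z + 2 * h)) ^ 2) / 2 ∧ (∫⁻ x, expE (mid h ψ x)) =
      ENNReal.ofReal (m - (∫ z, (G ψ z - G ψ (z + 2 * h)) ^ 2) / 2) := by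
  obtain ⟨hL, hi⟩ := G_memLp hψ hm0 hm
  have hS : ∀ a : ℝ, ∫ z, G ψ (z + a) ^ 2 = m := fun a => by
    rw [← hi]; exact integral_add_right_eq_self (fun z => G ψ z ^ 2) a
  have hP : Integrable (fun z => G ψ (z + (-h)) * G ψ (z + h)) :=
    (memLp_shift hL (-h)).integrable_mul (memLp_shift hL h)
  have key : ∫ z, (G ψ z - G ψ (z + 2 * h)) ^ 2
      = 2 * m - 2 * ∫ z, G ψ (z + (-h)) * G ψ (z + h) := by
    rw [← integral_add_right_eq_self (fun z => (G ψ z - G ψ (z + 2 * h)) ^ 2) (-h)]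
    have e : (fun z => (G ψ (z + -h) - G ψ (z + -h + 2 * h)) ^ 2) = fun z =>
        (G ψ (z + -h) ^ 2 + G ψ (z + h) ^ 2) - 2 * (G ψ (z + (-h)) * G ψ (z + h)) := by
      ext z
      have : z + -h + 2 * h = z + h := by ring
      rw [this]; ring
    have hadd : Integrable (fun z => G ψ (z + -h) ^ 2 + G ψ (z + h) ^ 2) :=
      ((memLp_shift hL (-h)).integrable_sq).add ((memLp_shift hL h).integrable_sq)
    rw [e, integral_sub hadd (hP.const_mul 2), integral_add
      ((memLp_shift hL (-h)).integrable_sq) ((memLp_shift hL h).integrable_sq), hS, hS,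
      integral_const_mul]
    ring
  rw [key]
  have : m - (2 * m - 2 * ∫ z, G ψ (z + (-h)) * G ψ (z + h)) / 2
      = ∫ z, G ψ (z + (-h)) * G ψ (z + h) := by ring
  refine ⟨by rw [this]; exact integral_nonneg fun z => mul_nonneg (G_nonneg _ _) (G_nonneg _ _), ?_⟩
  rw [this, ofReal_integral_eq_lintegral_ofReal hP
    (ae_of_all _ fun z => mul_nonneg (G_nonneg _ _) (G_nonneg _ _))]
  exact lintegral_congr fun z => expE_mid hψ.1

lemma gain {δ B M h : ℝ} (hδ : 0 < δ) (hh : h ≠ 0) : ∃ η > 0, ∀ ψ, memSC0 ψ →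
    Real.exp (-B) ≤ G ψ δ ^ 2 → ∀ m : ℝ, 0 ≤ m → (∫⁻ x, expE (ψ x)) = ENNReal.ofReal m → m ≤ M →
    η ≤ (∫ z, (G ψ z - G ψ (z + 2 * h)) ^ 2) / 2 := by
  set τ := 2 * h
  have hτ : 0 < |τ| := abs_pos.2 (mul_ne_zero two_ne_zero hh)
  set R : ℝ := 1 + 2 * |M| * Real.exp B with hR
  have hRpos : 0 < R := by positivity
  obtain ⟨N, hN⟩ := exists_nat_gt ((R + δ) / |τ|)
  have hNpos : (0:ℝ) < N := lt_trans (by positivity) hN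
  have hNR : R + δ < N * |τ| := by rwa [div_lt_iff₀ hτ] at hN
  refine ⟨δ * (Real.exp (-B) / 4) / N ^ 2 / 2, by positivity, fun ψ hψ hB m hm0 hm hM => ?_⟩
  obtain ⟨hL, -⟩ := G_memLp hψ hm0 hm
  have hs := shift_ineq hL τ N
  have hGR : G ψ R ≤ G ψ δ / 2 := by
    have h1 := mass_ge hψ hRpos.le hm hm0
    have hE : Real.exp B * Real.exp (-B) = 1 := by rw [← Real.exp_add]; simp
    have h2 : G ψ R ^ 2 ≤ Real.exp (-B) / 4 := by
      by_contra! hcon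
      have hMM : m ≤ |M| := hM.trans (le_abs_self M)
      have h3 : 2 * R * (Real.exp (-B) / 4) < 2 * R * G ψ R ^ 2 := by gcongr
      have h4 : 2 * R * (Real.exp (-B) / 4) = Real.exp (-B) / 2 + |M| := by
        rw [hR]; linear_combination |M| * hE
      have := Real.exp_pos (-B)
      linarith
    have h0 := G_nonneg ψ δ
    refine abs_le_of_sq_le_sq' ?_ (by positivity) |>.2
    nlinarith
  have hlow : δ * (Real.exp (-B) / 4) ≤ ∫ z, (G ψ z - G ψ (z + N * τ)) ^ 2 := by
    have hI : Integrable (fun z => (G ψ z - G ψ (z + N * τ)) ^ 2) :=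
      (hL.sub (memLp_shift hL _)).integrable_sq
    calc δ * (Real.exp (-B) / 4) = ∫ z in Icc 0 δ, Real.exp (-B) / 4 := by
          rw [setIntegral_const]; simp [measureReal_def, hδ.le]
      _ ≤ ∫ z in Icc 0 δ, (G ψ z - G ψ (z + N * τ)) ^ 2 := by
          refine setIntegral_mono_on (by simp) hI.integrableOn measurableSet_Icc fun z hz => ?_
          have h1 : G ψ δ ≤ G ψ z := G_mono hψ (by
            rw [abs_of_nonneg hz.1, abs_of_pos hδ]; exact hz.2)
          have h2 : G ψ (z + N * τ) ≤ G ψ R := G_mono hψ (by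
            rw [abs_of_pos hRpos]
            have h3 : |N * τ| - |z| ≤ |N * τ + z| := by
              have := abs_sub_abs_le_abs_sub (N * τ) (-z)
              simpa using this
            rw [abs_mul, Nat.abs_cast, abs_of_nonneg hz.1, add_comm] at h3
            linarith [hz.2])
          have h0 := G_nonneg ψ δ
          have h5 : G ψ δ / 2 ≤ G ψ z - G ψ (z + N * τ) := by linarith
          have h6 : (G ψ δ / 2) ^ 2 ≤ (G ψ z - G ψ (z + N * τ)) ^ 2 := by gcongr
          have h7 : (G ψ δ / 2) ^ 2 = G ψ δ ^ 2 / 4 := by ring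
          linarith
      _ ≤ _ := setIntegral_le_integral hI (ae_of_all _ fun z => sq_nonneg _)
  gcongr
  rw [div_le_iff₀ (by positivity)]
  linarith

lemma improve {μ : Measure ℝ} [IsProbabilityMeasure μ] {θ θ' : ℝ}
    (hsym : Measure.map (fun x => 2 * θ - x) μ = μ) {ψ : ℝ → EReal} (hψ : memSC0 ψ)
    (hb : Psi θ' ψ μ ≠ ⊥) {m : ℝ} (hm0 : 0 ≤ m) (hm : (∫⁻ x, expE (ψ x)) = ENNReal.ofReal m) :
    Psi θ' ψ μ + (((∫ z, (G ψ z - G ψ (z + 2 * (θ' - θ))) ^ 2) / 2 : ℝ) : EReal) ≤ Ltheta θ μ := by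
  obtain ⟨hae, hi, m', hm0', hm', hP⟩ := psi_fin hψ hb
  have : m' = m := by
    rw [hm] at hm'
    exact ((ENNReal.ofReal_eq_ofReal_iff hm0 hm0').1 hm').symm
  subst this
  set h := θ' - θ with hh
  have hmp : MeasurePreserving (fun x => 2 * θ - x) μ μ := ⟨by fun_prop, hsym⟩
  have ref : ∀ x, ψ (2 * θ - x - θ') = ψ (x - θ + h) := fun x => by
    rw [← hψ.2.2.2.2]; congr 1; rw [hh]; ring
  have ref1 : ∀ x, x - θ - h = x - θ' := fun x => by rw [hh]; ring
  have hae2 : ∀ᵐ x ∂μ, ψ (x - θ + h) ≠ ⊥ := by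
    have := hmp.quasiMeasurePreserving.ae hae
    filter_upwards [this] with x hx
    rwa [← ref]
  have hi2 : Integrable (fun x => (ψ (x - θ + h)).toReal) μ := by
    have := hmp.integrable_comp_of_integrable hi
    refine this.congr (ae_of_all _ fun x => ?_)
    simp only [Function.comp, ref]
  have hint2 : ∫ x, (ψ (x - θ + h)).toReal ∂μ = ∫ x, (ψ (x - θ')).toReal ∂μ := by
    have : ∫ x, (ψ (x - θ')).toReal ∂(Measure.map (fun x => 2 * θ - x) μ)
        = ∫ x, (ψ (2 * θ - x - θ')).toReal ∂μ :=
      integral_map (by fun_prop) (by rw [hsym]; exact hi.aestronglyMeasurable)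
    rw [hsym] at this
    rw [this]; simp only [ref]
  have hval : ∀ᵐ x ∂μ, mid h ψ (x - θ) =
      (((ψ (x - θ')).toReal + (ψ (x - θ + h)).toReal) / 2 : ℝ) := by
    filter_upwards [hae, hae2] with x h1 h2
    refine mid_coe ?_ (real_of (hψ.1 _) h2)
    rw [ref1]; exact real_of (hψ.1 _) h1
  have hφ : memSC0 (mid h ψ) := by
    obtain ⟨x, hx⟩ := hval.exists
    exact mid_mem hψ ⟨_, by rw [hx]; exact EReal.coe_ne_bot _⟩
  have hvalr : (fun x => ((ψ (x - θ')).toReal + (ψ (x - θ + h)).toReal) / 2) =ᵐ[μ]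
      fun x => (mid h ψ (x - θ)).toReal := by
    filter_upwards [hval] with x hx
    rw [hx, EReal.toReal_coe]
  have hE : eIntegral μ (fun x => mid h ψ (x - θ)) = ((∫ x, (ψ (x - θ')).toReal ∂μ : ℝ) : EReal) := by
    rw [eInt_real (fun x => hφ.1 _) (by
        filter_upwards [hval] with x hx
        rw [hx]; exact EReal.coe_ne_bot _) (((hi.add hi2).div_const 2).congr hvalr),
      ← integral_congr_ae hvalr, integral_div, integral_add hi hi2, hint2]
    congr 1; ring
  refine le_trans ?_ (le_iSup₂ (f := fun ψ (_ : ψ ∈ {ψ : ℝ → EReal | memSC0 ψ}) => Psi θ ψ μ)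
    (mid h ψ) hφ)
  obtain ⟨hnn, hmm⟩ := mid_mass hψ hm0 hm h
  rw [hP, Psi, hE, hmm, ennreal_coe_real ENNReal.ofReal_ne_top, ENNReal.toReal_ofReal hnn,
    ← EReal.coe_add, ← EReal.coe_sub]
  apply le_of_eq
  congr 1; ring

lemma L_ne_bot {μ : Measure ℝ} (hA : CondA μ) (θ : ℝ) : Ltheta θ μ ≠ ⊥ := by
  obtain ⟨hp, -, hfin⟩ := hA
  set ψ : ℝ → EReal := fun x => ((-|x| : ℝ) : EReal) with hψd
  have hψ : memSC0 ψ := by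
    refine ⟨fun x => EReal.coe_lt_top _, ⟨0, EReal.coe_ne_bot _⟩, ?_, ?_, fun x => by simp [hψd]⟩
    · exact Continuous.upperSemicontinuous (continuous_coe_real_ereal.comp (by fun_prop))
    · refine conc_of (fun x => EReal.coe_lt_top _) fun x y t a b h0 h1 hx hy => ⟨_, rfl, ?_⟩
      have hx : -|x| = a := EReal.coe_injective hx
      have hy : -|y| = b := EReal.coe_injective hy
      rw [← hx, ← hy]
      have := abs_add_le (t * x) ((1 - t) * y)
      rw [abs_mul, abs_mul, abs_of_pos h0, abs_of_pos (by linarith : 0 < 1 - t)] at this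
      linarith
  have hmass : (∫⁻ x, expE (ψ x)) ≠ ⊤ := by
    have hI : Integrable (fun x : ℝ => 2 * (1 + x ^ 2)⁻¹) := integrable_inv_one_add_sq.const_mul 2
    refine ne_of_lt (lt_of_le_of_lt (lintegral_mono fun x => ?_) hI.lintegral_lt_top)
    simp only [hψd, expE, EReal.coe_ne_bot, EReal.coe_ne_top, if_false, EReal.toReal_coe]
    refine ENNReal.ofReal_le_ofReal ?_
    have h := Real.quadratic_le_exp_of_nonneg (abs_nonneg x)
    rw [sq_abs] at h
    rw [Real.exp_neg, ← div_eq_mul_inv, inv_eq_one_div, div_le_div_iff₀ (Real.exp_pos _) (by positivity)]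
    have := abs_nonneg x
    linarith
  have hx : Integrable (fun x : ℝ => x) μ := by
    refine ⟨measurable_id.aestronglyMeasurable, ?_⟩
    rw [hasFiniteIntegral_iff_norm]
    exact hfin
  have hi : Integrable (fun x => (ψ (x - θ)).toReal) μ := by
    simp only [hψd, EReal.toReal_coe]
    exact (hx.sub (integrable_const θ)).abs.neg
  intro hb
  have h := le_iSup₂ (f := fun ψ (_ : ψ ∈ {ψ : ℝ → EReal | memSC0 ψ}) => Psi θ ψ μ) ψ hψ
  have h' : Psi θ ψ μ ≤ ⊥ := by rw [← hb]; exact h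
  rw [Psi, eInt_real (fun x => hψ.1 _) (ae_of_all _ fun x => EReal.coe_ne_bot _) hi,
    ennreal_coe_real hmass, ← EReal.coe_sub] at h'
  exact EReal.coe_ne_bot _ (le_bot_iff.1 h')

lemma nondeg {μ : Measure ℝ} [IsProbabilityMeasure μ] {θ : ℝ} (h : μ ≠ Measure.dirac θ) :
    ∃ δ > 0, 0 < μ.real {x | δ ≤ |x - θ|} := by
  by_contra! hcon
  apply h
  have hz : ∀ n : ℕ, μ {x | 1 / ((n : ℝ) + 1) ≤ |x - θ|} = 0 := fun n => by
    have := hcon (1 / ((n : ℝ) + 1)) (by positivity)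
    have := le_antisymm this measureReal_nonneg
    rwa [measureReal_eq_zero_iff] at this
  have hae : ∀ᵐ x ∂μ, x = θ := by
    have : ∀ᵐ x ∂μ, ∀ n : ℕ, ¬ (1 / ((n : ℝ) + 1) ≤ |x - θ|) := by
      rw [ae_all_iff]; intro n; rw [ae_iff]; simpa using hz n
    filter_upwards [this] with x hx
    by_contra hne
    obtain ⟨n, hn⟩ := exists_nat_one_div_lt (abs_pos.2 (sub_ne_zero.2 hne))
    exact hx n hn.le
  calc μ = Measure.map id μ := Measure.map_id.symm
    _ = Measure.map (fun _ => θ) μ := Measure.map_congr hae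
    _ = Measure.dirac θ := by rw [Measure.map_const]; simp

lemma L_lt {μ : Measure ℝ} (hA : CondA μ) {θ θ' : ℝ}
    (hsym : Measure.map (fun x => 2 * θ - x) μ = μ) (hne : θ' ≠ θ) :
    Ltheta θ' μ < Ltheta θ μ := by
  have := hA.1
  obtain ⟨δ, hδ, hq⟩ := nondeg (hA.2.1 θ')
  obtain ⟨k, -, hk⟩ := EReal.lt_iff_exists_real_btwn.1 (bot_lt_iff_ne_bot.2 (L_ne_bot hA θ))
  obtain ⟨S, B, hap⟩ := apriori (K := -k) hδ hq
  obtain ⟨η, hη, hg⟩ := gain (B := B) (M := S + -k) hδ (sub_ne_zero.2 hne)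
  have main : ∀ ψ, memSC0 ψ → Psi θ' ψ μ ≤ k ∨
      (Psi θ' ψ μ ≤ S ∧ Psi θ' ψ μ + η ≤ Ltheta θ μ) := by
    intro ψ hψ
    rcases le_total (Psi θ' ψ μ) k with h | h
    · exact Or.inl h
    right
    obtain ⟨h1, h2, m, hm0, hm, hmM⟩ := hap ψ hψ (by simpa using h)
    refine ⟨h1, ?_⟩
    have hb : Psi θ' ψ μ ≠ ⊥ := fun hh => by
      rw [hh] at h; exact EReal.coe_ne_bot _ (le_bot_iff.1 h)
    refine le_trans ?_ (improve hsym hψ hb hm0 hm)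
    have := hg ψ hψ h2 m hm0 hm hmM
    gcongr
  induction hL : Ltheta θ μ using EReal.rec with
  | bot => exact absurd hL (L_ne_bot hA θ)
  | top =>
    refine lt_of_le_of_lt (b := ((max k S : ℝ) : EReal)) ?_ (EReal.coe_lt_top _)
    refine iSup₂_le fun ψ hψ => ?_
    rcases main ψ hψ with h | h
    · exact h.trans (by exact_mod_cast le_max_left k S)
    · exact h.1.trans (by exact_mod_cast le_max_right k S)
  | coe l =>
    rw [hL] at hk main
    have hk : k < l := by exact_mod_cast hk
    refine lt_of_le_of_lt (b := ((max k (l - η) : ℝ) : EReal)) ?_ ?_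
    · refine iSup₂_le fun ψ hψ => ?_
      rcases main ψ hψ with h | h
      · exact h.trans (by exact_mod_cast le_max_left k _)
      · refine le_trans ?_ (by exact_mod_cast le_max_right k (l - η) :
          ((l - η : ℝ) : EReal) ≤ ((max k (l - η) : ℝ) : EReal))
        rw [EReal.coe_sub]
        exact EReal.le_sub_iff_add_le (Or.inl (EReal.coe_ne_bot _)) (Or.inl (EReal.coe_ne_top _)) |>.2 h.2
    · have : max k (l - η) < l := max_lt hk (by linarith)
      exact_mod_cast this


/-- If `μ` satisfies Condition A and is invariant under the reflection
about `θ`, then `L(θ'; F) ≤ L(θ; F)` for all `θ'`, with strict inequality for `θ' ≠ θ`;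
hence `θ` is the unique maximizer of `θ' ↦ L(θ'; F)`. -/
theorem statement10 (μ : Measure ℝ) (hA : CondA μ) (θ : ℝ)
    (hsym : Measure.map (fun x => 2 * θ - x) μ = μ) :
    ∀ θ' : ℝ, Ltheta θ' μ ≤ Ltheta θ μ ∧ (θ' ≠ θ → Ltheta θ' μ < Ltheta θ μ) := by
  intro θ'
  refine ⟨?_, fun hne => L_lt hA hsym hne⟩
  by_cases h : θ' = θ
  · rw [h]
  · exact (L_lt hA hsym h).le
end

section
/- Let F satisfy Condition A, let (a, b) with a ∈ [−∞, ∞) and b ∈ (−∞, ∞] be the interior of J(F) = {x ∈ ℝ : 0 < F(x) < 1}, fix θ ∈ ℝ, and let ψ_θ ∈ SC₀ be a maximizer of ψ ↦ Ψ(θ, ψ, F) over SC₀. Then the interior of dom ψ_θ = {ψ_θ > −∞} equals (−d, d), where d = max(b − θ, θ − a) (so int dom ψ_θ = ℝ when d = ∞). -/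
open MeasureTheory Filter Set
open scoped ENNReal NNReal

lemma EConcave_mono {ψ : ℝ → EReal} (h : memSC0 ψ) {x y : ℝ} (hxy : |x| ≤ |y|) : ψ y ≤ ψ x := by
  obtain ⟨htop, -, -, hc, hs⟩ := h
  by_cases hy : y = 0
  · subst hy
    have : x = 0 := by simpa using hxy
    rw [this]
  have hq : |x / y| ≤ 1 := by
    rw [abs_div]
    exact div_le_one_of_le₀ hxy (abs_nonneg _)
  obtain ⟨h1, h2⟩ := abs_le.1 hq
  have hcc := hc y (-y) ((1 + x / y) / 2) (by linarith) (by linarith)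
  have e : (1 + x / y) / 2 * y + (1 - (1 + x / y) / 2) * -y = x := by
    field_simp
    ring
  rw [e, hs] at hcc
  refine le_trans ?_ hcc
  have ht := htop y
  revert ht
  generalize ψ y = v
  intro ht
  induction v with
  | bot => exact bot_le
  | top => exact absurd ht (lt_irrefl _)
  | coe v =>
    rw [← EReal.coe_mul, ← EReal.coe_mul, ← EReal.coe_add]
    apply le_of_eq
    congr 1
    ring

lemma memSC0_trunc {ψ : ℝ → EReal} (h : memSC0 ψ) {r : ℝ} (hr : 0 ≤ r) (h0 : ψ 0 ≠ ⊥) :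
    memSC0 (fun x => if |x| ≤ r then ψ x else ⊥) := by
  obtain ⟨htop, -, hu, hc, hs⟩ := h
  refine ⟨?_, ⟨0, by simpa [hr] using h0⟩, ?_, ?_, ?_⟩
  · intro x
    dsimp only
    split_ifs
    · exact htop x
    · exact bot_lt_top
  · intro x c hxc
    dsimp only at hxc
    by_cases hx : |x| ≤ r
    · rw [if_pos hx] at hxc
      filter_upwards [hu x c hxc] with y hy
      split_ifs
      · exact hy
      · exact lt_of_le_of_lt bot_le hy
    · rw [if_neg hx] at hxc
      have : ∀ᶠ y in nhds x, r < |y| :=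
        (continuous_abs.tendsto x).eventually (lt_mem_nhds (not_le.1 hx))
      filter_upwards [this] with y hy
      rw [if_neg (not_le.2 hy)]
      exact hxc
  · intro x y t ht0 ht1
    dsimp only
    rcases eq_or_lt_of_le ht0 with rfl | ht0'
    · simp
    rcases eq_or_lt_of_le ht1 with rfl | ht1'
    · simp
    by_cases hx : |x| ≤ r
    · by_cases hy : |y| ≤ r
      · rw [if_pos hx, if_pos hy, if_pos]
        · exact hc x y t ht0 ht1
        · obtain ⟨a1, a2⟩ := abs_le.1 hx
          obtain ⟨b1, b2⟩ := abs_le.1 hy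
          rw [abs_le]
          constructor <;> nlinarith
      · rw [if_neg hy, EReal.coe_mul_bot_of_pos (by linarith), EReal.add_bot]
        exact bot_le
    · rw [if_neg hx, EReal.coe_mul_bot_of_pos ht0', EReal.bot_add]
      exact bot_le
  · intro x
    simp [hs]

lemma memSC0_abs : memSC0 (fun x => ((-|x| : ℝ) : EReal)) := by
  refine ⟨fun x => EReal.coe_lt_top _, ⟨0, EReal.coe_ne_bot _⟩, ?_, ?_, ?_⟩
  · exact (continuous_coe_real_ereal.comp continuous_abs.neg).upperSemicontinuous
  · intro x y t h0 h1
    rw [← EReal.coe_mul, ← EReal.coe_mul, ← EReal.coe_add, EReal.coe_le_coe_iff]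
    have := abs_add_le (t * x) ((1 - t) * y)
    rw [abs_mul, abs_mul, abs_of_nonneg h0, abs_of_nonneg (sub_nonneg.2 h1)] at this
    linarith
  · intro x
    simp

lemma expE_pos {y : EReal} (h : y ≠ ⊥) : 0 < expE y := by
  unfold expE
  rw [if_neg h]
  split_ifs
  · simp
  · simp [Real.exp_pos]

lemma expE_mono {x y : EReal} (h : x ≤ y) : expE x ≤ expE y := by
  induction x with
  | bot => simp [expE]
  | top => rw [top_le_iff.1 h]
  | coe x =>
    induction y with
    | bot => simp at h
    | top => simp [expE]
    | coe y =>
      simp only [expE, EReal.coe_ne_bot, EReal.coe_ne_top, if_false, EReal.toReal_coe]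
      exact ENNReal.ofReal_le_ofReal (Real.exp_le_exp.2 (by exact_mod_cast h))

lemma toENN_mono {x y : EReal} (h : x ≤ y) : toENN x ≤ toENN y := by
  induction x with
  | bot => simp [toENN]
  | top => rw [top_le_iff.1 h]
  | coe x =>
    induction y with
    | bot => simp at h
    | top => simp [toENN]
    | coe y =>
      simp only [toENN, EReal.coe_ne_top, if_false, EReal.toReal_coe]
      exact ENNReal.ofReal_le_ofReal (by exact_mod_cast h)

lemma Psi_abs (μ : Measure ℝ) (hA : CondA μ) (θ : ℝ) :
    Psi θ (fun x => ((-|x| : ℝ) : EReal)) μ ≠ ⊥ := by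
  obtain ⟨hP, -, hm⟩ := hA
  unfold Psi eIntegral
  have hp : (∫⁻ x, toENN ((-|x - θ| : ℝ) : EReal) ∂μ) = 0 := by
    have : ∀ x : ℝ, toENN ((-|x - θ| : ℝ) : EReal) = 0 := by
      intro x
      simp only [toENN, EReal.coe_ne_top, if_false, EReal.toReal_coe]
      exact ENNReal.ofReal_of_nonpos (by simp)
    simp only [this, lintegral_zero]
  have hn : (∫⁻ x, toENN (-((-|x - θ| : ℝ) : EReal)) ∂μ) ≠ ⊤ := by
    have h1 : ∀ x : ℝ, toENN (-((-|x - θ| : ℝ) : EReal)) ≤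
        ENNReal.ofReal |x| + ENNReal.ofReal |θ| := by
      intro x
      rw [← EReal.coe_neg, ← ENNReal.ofReal_add (abs_nonneg _) (abs_nonneg _)]
      simp only [toENN, EReal.coe_ne_top, if_false, EReal.toReal_coe, neg_neg]
      exact ENNReal.ofReal_le_ofReal (abs_sub x θ)
    refine ne_of_lt (lt_of_le_of_lt (lintegral_mono h1) ?_)
    rw [lintegral_add_right _ measurable_const]
    simpa using hm
  have hE : (∫⁻ x, expE ((-|x| : ℝ) : EReal)) ≠ ⊤ := by
    have h2 : ∀ x : ℝ, expE ((-|x| : ℝ) : EReal) = ENNReal.ofReal (Real.exp (-|x|)) := by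
      intro x
      simp only [expE, EReal.coe_ne_top, EReal.coe_ne_bot, if_false, EReal.toReal_coe]
    simp only [h2]
    have hi : Integrable (fun x : ℝ => Real.exp (-|x|)) := by
      rw [← integrableOn_univ, ← Iic_union_Ioi (a := (0 : ℝ))]
      refine IntegrableOn.union ?_ ?_
      · refine (integrableOn_exp_Iic 0).congr_fun (fun x hx => ?_) measurableSet_Iic
        simp only [abs_of_nonpos (show x ≤ 0 from hx), neg_neg]
      · refine (integrableOn_exp_neg_Ioi 0).congr_fun (fun x hx => ?_) measurableSet_Ioi
        simp only [abs_of_pos (show 0 < x from hx)]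
    exact hi.lintegral_lt_top.ne
  rw [hp]
  revert hn hE
  generalize (∫⁻ x, toENN (-((-|x - θ| : ℝ) : EReal)) ∂μ) = n
  generalize (∫⁻ x, expE ((-|x| : ℝ) : EReal)) = E
  intro hn hE
  lift n to ℝ≥0 using hn
  lift E to ℝ≥0 using hE
  simp only [EReal.coe_ennreal_zero]
  change ((0 : ℝ) : EReal) - ((n : ℝ) : EReal) - ((E : ℝ) : EReal) ≠ ⊥
  rw [← EReal.coe_sub, ← EReal.coe_sub]
  exact EReal.coe_ne_bot _

lemma exists_two (μ : Measure ℝ) (hA : CondA μ) : ∃ x y : ℝ, x < y ∧ x ∈ Jset μ ∧ y ∈ Jset μ := by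
  obtain ⟨hP, hd, -⟩ := hA
  have hmono : ∀ x y : ℝ, x ≤ y → μ (Iic x) ≤ μ (Iic y) :=
    fun x y h => measure_mono (Iic_subset_Iic.2 h)
  by_contra hcon
  push Not at hcon
  have htop : Tendsto (fun x : ℝ => μ (Iic x)) atTop (nhds 1) := by
    simpa using tendsto_measure_Iic_atTop μ
  have hbot : Tendsto (fun x : ℝ => μ (Iic x)) atBot (nhds 0) := by
    have h := (ENNReal.continuous_ofReal.tendsto 0).comp (ProbabilityTheory.tendsto_cdf_atBot μ)
    simpa [Function.comp_def, ProbabilityTheory.ofReal_cdf] using h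
  set S : Set ℝ := {x | μ (Iic x) = 1} with hS
  have hne : S.Nonempty := by
    by_contra hne
    have hlt : ∀ x, μ (Iic x) < 1 := fun x =>
      lt_of_le_of_ne prob_le_one (fun h => hne ⟨x, h⟩)
    obtain ⟨x, hx⟩ := (htop.eventually (lt_mem_nhds (show (0 : ℝ≥0∞) < 1 by simp))).exists
    exact hcon x (x + 1) (by linarith) ⟨hx, hlt x⟩
      ⟨hx.trans_le (hmono _ _ (by linarith)), hlt _⟩
  have hbd : BddBelow S := by
    obtain ⟨x, hx⟩ := (hbot.eventually (gt_mem_nhds (show (0 : ℝ≥0∞) < 1 by simp))).exists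
    refine ⟨x, fun y hy => ?_⟩
    by_contra hyx
    have := hmono y x (by linarith)
    rw [show μ (Iic y) = 1 from hy] at this
    exact absurd hx (not_lt.2 this)
  set c := sInf S with hc
  have hlo : ∀ x < c, μ (Iic x) = 0 := by
    intro x hx
    by_contra h0
    have hlt : ∀ y < c, μ (Iic y) < 1 := fun y hy =>
      lt_of_le_of_ne prob_le_one (fun h => absurd (csInf_le hbd h) (not_le.2 hy))
    have h0' := pos_iff_ne_zero.2 h0
    exact hcon x ((x + c) / 2) (by linarith) ⟨h0', hlt x hx⟩
      ⟨h0'.trans_le (hmono _ _ (by linarith)), hlt _ (by linarith)⟩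
  have hhi : ∀ x > c, μ (Ioi x) = 0 := by
    intro x hx
    obtain ⟨y, hy, hyx⟩ := exists_lt_of_csInf_lt hne hx
    have h1 : μ (Iic x) = 1 := le_antisymm prob_le_one (by
      rw [← show μ (Iic y) = 1 from hy]; exact hmono _ _ hyx.le)
    rw [← compl_Iic, prob_compl_eq_zero_iff measurableSet_Iic]
    exact h1
  have hcompl : μ {c}ᶜ = 0 := by
    have hsub : ({c}ᶜ : Set ℝ) ⊆ ⋃ n : ℕ, (Iic (c - 1 / ((n : ℝ) + 1)) ∪ Ioi (c + 1 / ((n : ℝ) + 1))) := by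
      intro x hx
      have hx' : x ≠ c := hx
      obtain ⟨n, hn⟩ := exists_nat_one_div_lt (abs_pos.2 (sub_ne_zero.2 hx'))
      refine mem_iUnion.2 ⟨n, ?_⟩
      rcases lt_abs.1 hn with h | h
      · right
        simp only [mem_Ioi]
        linarith
      · left
        simp only [mem_Iic]
        linarith
    refine measure_mono_null hsub (measure_iUnion_null fun n => measure_union_null ?_ ?_)
    · exact hlo _ (by have : (0 : ℝ) < 1 / ((n : ℝ) + 1) := by positivity
                      linarith)
    · exact hhi _ (by have : (0 : ℝ) < 1 / ((n : ℝ) + 1) := by positivity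
                      show c < _
                      linarith)
  have h1 : μ {c} = 1 := by
    rwa [prob_compl_eq_zero_iff (measurableSet_singleton c)] at hcompl
  apply hd c
  have h2 := Measure.restrict_eq_self_of_ae_mem (μ := μ) (s := {c}) (by
    rw [ae_iff]; exact hcompl)
  rw [← h2, Measure.restrict_singleton, h1, one_smul]

lemma mem_D_iff (D : EReal) (x : ℝ) :
    (-D < (x : EReal) ∧ (x : EReal) < D) ↔ ((|x| : ℝ) : EReal) < D := by
  rw [EReal.neg_lt_comm, ← EReal.coe_neg]
  rcases le_total 0 x with h | h
  · rw [abs_of_nonneg h]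
    refine ⟨fun h => h.2, fun h' => ⟨lt_of_le_of_lt ?_ h', h'⟩⟩
    exact_mod_cast (by linarith : -x ≤ x)
  · rw [abs_of_nonpos h]
    refine ⟨fun h => h.1, fun h' => ⟨h', lt_of_le_of_lt ?_ h'⟩⟩
    exact_mod_cast (by linarith : x ≤ -x)

lemma lt_D_iff (a b : EReal) (θ x : ℝ) :
    ((x : EReal) < max (b - (θ : EReal)) ((θ : EReal) - a)) ↔
      (((x + θ : ℝ) : EReal) < b ∨ a < ((θ - x : ℝ) : EReal)) := by
  rw [lt_max_iff]
  have h1 : (x : EReal) < b - (θ : EReal) ↔ ((x + θ : ℝ) : EReal) < b := by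
    induction b with
    | bot => simp
    | top => simp [EReal.coe_lt_top, -EReal.coe_add]
    | coe b =>
      rw [← EReal.coe_sub, EReal.coe_lt_coe_iff, EReal.coe_lt_coe_iff]
      exact lt_sub_iff_add_lt
  have h2 : (x : EReal) < (θ : EReal) - a ↔ a < ((θ - x : ℝ) : EReal) := by
    induction a with
    | bot => simp [EReal.coe_lt_top, EReal.bot_lt_coe, -EReal.coe_sub]
    | top => simp
    | coe b =>
      rw [← EReal.coe_sub, EReal.coe_lt_coe_iff, EReal.coe_lt_coe_iff]
      exact lt_sub_comm
  rw [h1, h2]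

lemma Psi_final {μ : Measure ℝ} {θ : ℝ} {ψ : ℝ → EReal} (hψ : memSC0 ψ)
    (hP : IsProbabilityMeasure μ) (hbot : Psi θ ψ μ ≠ ⊥) :
    (∫⁻ x, toENN (ψ (x - θ)) ∂μ) ≠ ⊤ ∧ (∫⁻ x, toENN (-ψ (x - θ)) ∂μ) ≠ ⊤ ∧
      (∫⁻ x, expE (ψ x)) ≠ ⊤ := by
  refine ⟨?_, ?_, ?_⟩
  · have h : ∀ x, toENN (ψ (x - θ)) ≤ toENN (ψ 0) := fun x =>
      toENN_mono (EConcave_mono hψ (by simp))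
    refine ne_of_lt (lt_of_le_of_lt (lintegral_mono h) ?_)
    simp only [lintegral_const, measure_univ, mul_one]
    unfold toENN
    rw [if_neg (hψ.1 0).ne]
    exact ENNReal.ofReal_lt_top
  · intro h
    apply hbot
    simp [Psi, eIntegral, h]
  · intro h
    apply hbot
    simp [Psi, h]

/-- With `(a, b)` the interior of `J(F) = {0 < F < 1}` and `ψ_θ` the
maximizer of `ψ ↦ Ψ(θ, ψ, F)` over `SC₀`, the interior of `dom ψ_θ` equals `(−d, d)`
where `d = max(b − θ, θ − a)` (as extended reals). -/
theorem statement11 (μ : Measure ℝ) (hA : CondA μ)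
    (aE bE : EReal) (haE : aE ≠ ⊤) (hbE : bE ≠ ⊥)
    (hJ : interior (Jset μ) = {x : ℝ | aE < (x : EReal) ∧ (x : EReal) < bE})
    (θ : ℝ) (ψθ : ℝ → EReal) (hψ : memSC0 ψθ)
    (hmaxψ : ∀ ψ' : ℝ → EReal, memSC0 ψ' → Psi θ ψ' μ ≤ Psi θ ψθ μ) :
    interior {x : ℝ | ψθ x ≠ ⊥} =
      {x : ℝ |
        -(max (bE - (θ : EReal)) ((θ : EReal) - aE)) < (x : EReal) ∧
          (x : EReal) < max (bE - (θ : EReal)) ((θ : EReal) - aE)} := by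
  have hP := hA.1
  have hmono : ∀ x y : ℝ, x ≤ y → μ (Iic x) ≤ μ (Iic y) :=
    fun x y h => measure_mono (Iic_subset_Iic.2 h)
  have hPsi : Psi θ ψθ μ ≠ ⊥ := fun h =>
    Psi_abs μ hA θ (le_bot_iff.1 (h ▸ hmaxψ _ memSC0_abs))
  obtain ⟨hp, hn, hE⟩ := Psi_final hψ hP hPsi
  have hJint : ∀ x y z : ℝ, x < z → z < y → 0 < μ (Iic x) → μ (Iic y) < 1 →
      aE < (z : EReal) ∧ (z : EReal) < bE := by
    intro x y z hxz hzy hx hy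
    have : z ∈ interior (Jset μ) := by
      refine interior_mono (s := Ioo x y) ?_ (by rw [interior_Ioo]; exact ⟨hxz, hzy⟩)
      intro w hw
      exact ⟨hx.trans_le (hmono _ _ hw.1.le), (hmono _ _ hw.2.le).trans_lt hy⟩
    rw [hJ] at this
    exact this
  obtain ⟨u, v, huv, hu, hv⟩ := exists_two μ hA
  obtain ⟨m, hum, hmv⟩ := exists_between huv
  obtain ⟨ham, hmb⟩ := hJint u v m hum hmv hu.1 hv.2
  have hJmem : ∀ z : ℝ, aE < (z : EReal) → (z : EReal) < bE → z ∈ Jset μ := by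
    intro z h1 h2
    apply interior_subset
    rw [hJ]
    exact ⟨h1, h2⟩
  have hupper : ∀ c : ℝ, (c : EReal) < bE → μ (Iic c) < 1 := by
    intro c hc
    have := hJmem (max c m) (ham.trans_le (by exact_mod_cast le_max_right c m))
      (by rcases max_choice c m with h | h <;> rw [h] <;> assumption)
    exact (hmono _ _ (le_max_left c m)).trans_lt this.2
  have hlower : ∀ c : ℝ, aE < (c : EReal) → 0 < μ (Iic c) := by
    intro c hc
    have := hJmem (min c m) (by rcases min_choice c m with h | h <;> rw [h] <;> assumption)
      (lt_of_le_of_lt (by exact_mod_cast min_le_right c m) hmb)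
    exact this.1.trans_le (hmono _ _ (min_le_left c m))
  have hset : {x : ℝ |
        -(max (bE - (θ : EReal)) ((θ : EReal) - aE)) < (x : EReal) ∧
          (x : EReal) < max (bE - (θ : EReal)) ((θ : EReal) - aE)} =
      {x : ℝ | (((|x| + θ : ℝ) : EReal) < bE ∨ aE < ((θ - |x| : ℝ) : EReal))} := by
    ext x
    simp only [mem_ofPred_eq]
    rw [mem_D_iff, lt_D_iff]
  have hinner : ∀ x : ℝ, (((|x| + θ : ℝ) : EReal) < bE ∨ aE < ((θ - |x| : ℝ) : EReal)) →
      ψθ x ≠ ⊥ := by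
    intro x hx hbot
    have hpos : ∃ T : Set ℝ, MeasurableSet T ∧ μ T ≠ 0 ∧ ∀ y ∈ T, |x| ≤ |y - θ| := by
      rcases hx with h | h
      · refine ⟨Ioi (|x| + θ), measurableSet_Ioi, ?_, ?_⟩
        · rw [← compl_Iic, Ne, prob_compl_eq_zero_iff measurableSet_Iic]
          exact (hupper _ h).ne
        · intro y hy
          have hy' : |x| + θ < y := hy
          exact le_trans (by linarith) (le_abs_self _)
      · refine ⟨Iic (θ - |x|), measurableSet_Iic, (hlower _ h).ne', ?_⟩
        intro y hy
        have hy' : y ≤ θ - |x| := hy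
        exact le_trans (by linarith) (neg_le_abs _)
    obtain ⟨T, hT, hT0, hTx⟩ := hpos
    apply hn
    rw [eq_top_iff]
    calc (⊤ : ℝ≥0∞) = ∫⁻ y in T, ⊤ ∂μ := by
          rw [setLIntegral_const, ENNReal.top_mul hT0]
      _ ≤ ∫⁻ y in T, toENN (-ψθ (y - θ)) ∂μ := by
          refine setLIntegral_mono' hT (fun y hy => ?_)
          have : ψθ (y - θ) = ⊥ := le_bot_iff.1 (hbot ▸ EConcave_mono hψ (hTx y hy))
          simp [this, toENN]
      _ ≤ _ := setLIntegral_le_lintegral _ _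
  rw [hset]
  apply Subset.antisymm
  · intro x hx
    by_contra hxD
    simp only [mem_ofPred_eq, not_or, not_lt] at hxD
    obtain ⟨hxb, hxa⟩ := hxD
    -- a larger point in the domain
    obtain ⟨ε, hε, hball⟩ := Metric.isOpen_iff.1 isOpen_interior x hx
    have hz : ∃ z : ℝ, |x| < z ∧ ψθ z ≠ ⊥ := by
      refine ⟨|x| + ε / 2, by linarith, ?_⟩
      rcases le_total 0 x with h | h
      · rw [abs_of_nonneg h]
        exact interior_subset (hball (by
          rw [Metric.mem_ball, Real.dist_eq, add_sub_cancel_left, abs_of_pos (by linarith)]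
          linarith))
      · rw [abs_of_nonpos h, show -x + ε / 2 = -(x - ε / 2) by ring, hψ.2.2.2.2]
        exact interior_subset (hball (by
          rw [Metric.mem_ball, Real.dist_eq, show x - ε / 2 - x = -(ε / 2) by ring, abs_neg,
            abs_of_pos (by linarith)]
          linarith))
    obtain ⟨z, hxz, hzbot⟩ := hz
    obtain ⟨r, hxr, hrz⟩ := exists_between hxz
    have hr0 : 0 ≤ r := (abs_nonneg x).trans hxr.le
    have hz0 : 0 ≤ z := hr0.trans hrz.le
    have h0 : ψθ 0 ≠ ⊥ := fun h => hzbot (le_bot_iff.1 (h ▸ EConcave_mono hψ (by simp)))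
    -- tails are null
    have hR : μ (Ioi (r + θ)) = 0 := by
      rw [← compl_Iic, prob_compl_eq_zero_iff measurableSet_Iic]
      by_contra hne
      have hlt := lt_of_le_of_ne prob_le_one hne
      have hm' : m < |x| + θ := by
        have := hmb.trans_le hxb
        exact_mod_cast this
      obtain ⟨w, hw1, hw2⟩ := exists_between (show |x| + θ < r + θ by linarith)
      have := (hJint u (r + θ) w (by linarith) hw2 hu.1 hlt).2
      have h3 := this.trans_le hxb
      have h4 : w < |x| + θ := by exact_mod_cast h3
      linarith
    have hL : μ (Iic (θ - r)) = 0 := by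
      by_contra hne
      have hlt := pos_iff_ne_zero.2 hne
      have hm' : θ - |x| < m := by
        have := hxa.trans_lt ham
        exact_mod_cast this
      obtain ⟨w, hw1, hw2⟩ := exists_between (show θ - r < θ - |x| by linarith)
      have := (hJint (θ - r) v w hw1 (by linarith) hlt hv.2).1
      have h3 := hxa.trans_lt this
      have h4 : θ - |x| < w := by exact_mod_cast h3
      linarith
    have hae : ∀ᵐ y ∂μ, |y - θ| ≤ r := by
      rw [ae_iff]
      refine measure_mono_null ?_ (measure_union_null hR hL)
      intro y hy
      simp only [mem_ofPred_eq, not_le] at hy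
      rcases lt_abs.1 hy with h | h
      · left
        simp only [mem_Ioi]
        linarith
      · right
        simp only [mem_Iic]
        linarith
    have hle := hmaxψ _ (memSC0_trunc hψ hr0 h0)
    have e1 : (∫⁻ y, toENN (if |y - θ| ≤ r then ψθ (y - θ) else ⊥) ∂μ) =
        ∫⁻ y, toENN (ψθ (y - θ)) ∂μ := by
      refine lintegral_congr_ae ?_
      filter_upwards [hae] with y hy
      rw [if_pos hy]
    have e2 : (∫⁻ y, toENN (-(if |y - θ| ≤ r then ψθ (y - θ) else ⊥)) ∂μ) =
        ∫⁻ y, toENN (-ψθ (y - θ)) ∂μ := by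
      refine lintegral_congr_ae ?_
      filter_upwards [hae] with y hy
      rw [if_pos hy]
    have hKm : MeasurableSet (Icc (-r) r) := measurableSet_Icc
    have e3 : (∫⁻ y, expE (if |y| ≤ r then ψθ y else ⊥)) =
        ∫⁻ y in Icc (-r) r, expE (ψθ y) := by
      rw [← lintegral_indicator hKm]
      refine lintegral_congr fun y => ?_
      by_cases hy : |y| ≤ r
      · rw [if_pos hy, indicator_of_mem (s := Icc (-r) r) (abs_le.1 hy)]
      · rw [if_neg hy, indicator_of_notMem (s := Icc (-r) r) (fun h => hy (abs_le.2 h))]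
        simp [expE]
    have e4 : (∫⁻ y in Icc (-r) r, expE (ψθ y)) + expE (ψθ z) * ENNReal.ofReal (z - r) ≤
        ∫⁻ y, expE (ψθ y) := by
      refine le_of_le_of_eq (add_le_add le_rfl ?_)
        (lintegral_add_compl (μ := volume) (fun y => expE (ψθ y)) hKm)
      calc expE (ψθ z) * ENNReal.ofReal (z - r) = ∫⁻ y in Ioc r z, expE (ψθ z) := by
            rw [setLIntegral_const, Real.volume_Ioc]
        _ ≤ ∫⁻ y in Ioc r z, expE (ψθ y) := by
            refine setLIntegral_mono' measurableSet_Ioc (fun y hy => ?_)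
            refine expE_mono (EConcave_mono hψ ?_)
            rw [abs_of_nonneg (hr0.trans hy.1.le), abs_of_nonneg hz0]
            exact hy.2
        _ ≤ _ := by
            refine lintegral_mono_set (fun y hy hy' => ?_)
            exact absurd hy.1 (not_lt.2 hy'.2)
    have hq : 0 < expE (ψθ z) * ENNReal.ofReal (z - r) :=
      ENNReal.mul_pos (expE_pos hzbot).ne' (by simpa using hrz)
    unfold Psi eIntegral at hle
    simp only [] at hle
    rw [e1, e2, e3] at hle
    clear hPsi
    revert hp hn hE e4 hq hle
    generalize (∫⁻ y in Icc (-r) r, expE (ψθ y)) = E'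
    generalize (∫⁻ y, expE (ψθ y)) = E
    generalize (∫⁻ y, toENN (ψθ (y - θ)) ∂μ) = p
    generalize (∫⁻ y, toENN (-ψθ (y - θ)) ∂μ) = n
    generalize expE (ψθ z) * ENNReal.ofReal (z - r) = q
    intro hp hn hE hle e4 hq
    have hE' : E' ≠ ⊤ := ne_top_of_le_ne_top hE (le_self_add.trans e4)
    have hlt : E' < E := (ENNReal.lt_add_right hE' hq.ne').trans_le e4
    lift p to ℝ≥0 using hp
    lift n to ℝ≥0 using hn
    lift E to ℝ≥0 using hE
    lift E' to ℝ≥0 using hE'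
    change ((p : ℝ) : EReal) - ((n : ℝ) : EReal) - ((E' : ℝ) : EReal) ≤
      ((p : ℝ) : EReal) - ((n : ℝ) : EReal) - ((E : ℝ) : EReal) at hle
    rw [← EReal.coe_sub, ← EReal.coe_sub, ← EReal.coe_sub, EReal.coe_le_coe_iff] at hle
    have hlt' : (E' : ℝ) < E := by exact_mod_cast hlt
    linarith
  · apply interior_maximal
    · intro x hx
      exact hinner x hx
    · rw [ofPred_or]
      refine IsOpen.union ?_ ?_
      · exact isOpen_lt (continuous_coe_real_ereal.comp (continuous_abs.add continuous_const))
          continuous_const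
      · exact isOpen_lt continuous_const
          (continuous_coe_real_ereal.comp (continuous_const.sub continuous_abs))
end
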